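/- arXiv:1908.06000 — 4 statements merged into one kernel-verified Lean document; each statement's English description precedes it below -/
import Mathlib

section
/- Let Z be a free abelian group, let A, B ⊆ Z be finite sets, let G ⊆ A × B, and let C = {a + b : (a, b) ∈ G}. Let N₀ ≥ 1 and M ≥ 1 be such that #A ≤ N₀, #B ≤ N₀, #C ≤ N₀, and for every z ∈ Z the fiber {(a, b) ∈ G : a − b = z} has cardinality at most M. Then #G ≤ M^{1/6} · N₀^{11/6}. -/
open Finset

/-- The number of elements of `s` on which `f` takes the same value as at `v`. -/
def fiberCard {α β : Type*} [DecidableEq β] (s : Finset α) (f : α → β) (v : α) : ℕ :=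
  #{u ∈ s | f v = f u}

/-- The pairs of elements of `s` on which `f` takes the same value. -/
def fiberPairs {α β : Type*} [DecidableEq β] (s : Finset α) (f : α → β) : Finset (α × α) :=
  {p ∈ s ×ˢ s | f p.1 = f p.2}

/-- The chains `v₀, v₁, v₂, v₃` in `s`, stored as `⟨(v₁, v₂), (v₀, v₃)⟩`, for which
`f₁ v₀ = f₁ v₁`, `f₂ v₁ = f₂ v₂` and `f₃ v₂ = f₃ v₃`. -/
def fiberChains {α β : Type*} [DecidableEq β] (s : Finset α) (f₁ f₂ f₃ : α → β) :
    Finset (Σ _ : α × α, α × α) :=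
  (fiberPairs s f₂).sigma fun p ↦ {u ∈ s | f₁ p.1 = f₁ u} ×ˢ {u ∈ s | f₃ p.2 = f₃ u}

section Counting

variable {α β : Type*} [DecidableEq β] (s : Finset α)

theorem fiberCard_pos {f : α → β} {v : α} (hv : v ∈ s) : (0 : ℝ) < fiberCard s f v := by
  exact_mod_cast card_pos.2 ⟨v, by simp [hv]⟩

theorem sum_inv_fiberCard_le {f : α → β} {t : Finset β} (hf : ∀ v ∈ s, f v ∈ t) :
    ∑ v ∈ s, ((fiberCard s f v : ℝ))⁻¹ ≤ #t := by
  rw [← sum_fiberwise_of_maps_to hf, card_eq_sum_ones, Nat.cast_sum]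
  refine sum_le_sum fun b _ ↦ ?_
  have h : ∀ v ∈ s.filter (f · = b),
      ((fiberCard s f v : ℝ))⁻¹ = ((#(s.filter (f · = b)) : ℕ) : ℝ)⁻¹ := by
    intro v hv
    rw [mem_filter] at hv
    unfold fiberCard
    simp only [hv.2, eq_comm]
  rw [sum_congr rfl h, sum_const, nsmul_eq_mul, Nat.cast_one]
  exact mul_inv_le_one

theorem sum_fiberPairs_fst (f : α → β) (g : α → ℝ) :
    ∑ p ∈ fiberPairs s f, g p.1 = ∑ v ∈ s, fiberCard s f v * g v := by
  rw [fiberPairs, sum_filter, sum_product]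
  refine sum_congr rfl fun v _ ↦ ?_
  rw [← sum_filter, ← nsmul_eq_mul, fiberCard, ← sum_const]

theorem sum_fiberPairs_snd (f : α → β) (g : α → ℝ) :
    ∑ p ∈ fiberPairs s f, g p.2 = ∑ v ∈ s, fiberCard s f v * g v := by
  rw [fiberPairs, sum_filter, sum_product_right]
  refine sum_congr rfl fun v _ ↦ ?_
  rw [← sum_filter, ← nsmul_eq_mul, fiberCard, ← sum_const]
  exact sum_congr (filter_congr fun _ _ ↦ eq_comm) fun _ _ ↦ rfl

theorem card_sq_le_card_fiberPairs_mul {f : α → β} {t : Finset β} (hf : ∀ v ∈ s, f v ∈ t) :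
    (#s : ℝ) ^ 2 ≤ #(fiberPairs s f) * #t := by
  have h1 : (#(fiberPairs s f) : ℝ) = ∑ v ∈ s, (fiberCard s f v : ℝ) := by
    simpa using sum_fiberPairs_fst s f fun _ ↦ 1
  have h2 := sum_sq_le_sum_mul_sum_of_sq_le_mul s (r := fun _ ↦ (1 : ℝ))
    (f := fun v ↦ (fiberCard s f v : ℝ)) (g := fun v ↦ (fiberCard s f v : ℝ)⁻¹)
    (fun _ _ ↦ by positivity) (fun _ _ ↦ by positivity)
    (fun v hv ↦ by simp [(fiberCard_pos s hv (f := f)).ne'])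
  rw [h1]
  calc (#s : ℝ) ^ 2 = (∑ v ∈ s, (1 : ℝ)) ^ 2 := by simp
    _ ≤ _ := h2
    _ ≤ _ := by gcongr; exact sum_inv_fiberCard_le s hf

theorem sum_pow_four_le_of_pow_four_eq_mul {ι : Type*} (s : Finset ι) {r a b c d : ι → ℝ}
    (ha : ∀ i ∈ s, 0 ≤ a i) (hb : ∀ i ∈ s, 0 ≤ b i)
    (hc : ∀ i ∈ s, 0 ≤ c i) (hd : ∀ i ∈ s, 0 ≤ d i)
    (h : ∀ i ∈ s, r i ^ 4 = a i * b i * (c i * d i)) :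
    (∑ i ∈ s, r i) ^ 4 ≤
      (∑ i ∈ s, a i) * (∑ i ∈ s, b i) * ((∑ i ∈ s, c i) * ∑ i ∈ s, d i) := by
  have h1 := sum_sq_le_sum_mul_sum_of_sq_le_mul s (r := r)
    (f := fun i ↦ √(a i * b i)) (g := fun i ↦ √(c i * d i))
    (fun _ _ ↦ by positivity) (fun _ _ ↦ by positivity) (fun i hi ↦ by
      rw [← Real.sqrt_mul (mul_nonneg (ha i hi) (hb i hi)), ← h i hi,
        show r i ^ 4 = (r i ^ 2) ^ 2 by ring, Real.sqrt_sq (sq_nonneg _)])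
  have h2 := sum_sq_le_sum_mul_sum_of_sq_le_mul s (r := fun i ↦ √(a i * b i)) ha hb
    fun i hi ↦ (Real.sq_sqrt (mul_nonneg (ha i hi) (hb i hi))).le
  have h3 := sum_sq_le_sum_mul_sum_of_sq_le_mul s (r := fun i ↦ √(c i * d i)) hc hd
    fun i hi ↦ (Real.sq_sqrt (mul_nonneg (hc i hi) (hd i hi))).le
  calc (∑ i ∈ s, r i) ^ 4 = ((∑ i ∈ s, r i) ^ 2) ^ 2 := by ring
    _ ≤ ((∑ i ∈ s, √(a i * b i)) * ∑ i ∈ s, √(c i * d i)) ^ 2 := by gcongr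
    _ = (∑ i ∈ s, √(a i * b i)) ^ 2 * (∑ i ∈ s, √(c i * d i)) ^ 2 := by ring
    _ ≤ _ := mul_le_mul h2 h3 (sq_nonneg _) ((sq_nonneg _).trans h2)

/-- Weighted Hölder lower bound for the number of chains `v₀, v₁, v₂, v₃`. -/
theorem card_pow_four_le_card_fiberChains_mul {f₁ f₂ f₃ : α → β} {t₁ t₂ t₃ : Finset β}
    (h₁ : ∀ v ∈ s, f₁ v ∈ t₁) (h₂ : ∀ v ∈ s, f₂ v ∈ t₂) (h₃ : ∀ v ∈ s, f₃ v ∈ t₃) :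
    (#s : ℝ) ^ 4 ≤ #(fiberChains s f₁ f₂ f₃) * #t₁ * (#t₂ * #t₃) := by
  have hcard : (#(fiberChains s f₁ f₂ f₃) : ℝ) =
      ∑ p ∈ fiberPairs s f₂, (fiberCard s f₁ p.1 : ℝ) * fiberCard s f₃ p.2 := by
    simp [fiberChains, card_sigma, card_product, fiberCard]
  have cancel : ∀ g : α → ℝ,
      ∑ v ∈ s, (fiberCard s f₂ v : ℝ) * ((fiberCard s f₂ v : ℝ)⁻¹ * g v) = ∑ v ∈ s, g v :=
    fun g ↦ sum_congr rfl fun v hv ↦ mul_inv_cancel_left₀ (fiberCard_pos s hv).ne' _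
  have hsum : ∑ p ∈ fiberPairs s f₂, ((fiberCard s f₂ p.1 : ℝ)⁻¹ * 1) = #s := by
    rw [sum_fiberPairs_fst s f₂ fun v ↦ (fiberCard s f₂ v : ℝ)⁻¹ * 1, cancel]
    simp
  have key := sum_pow_four_le_of_pow_four_eq_mul (fiberPairs s f₂)
    (r := fun p ↦ (fiberCard s f₂ p.1 : ℝ)⁻¹ * 1)
    (a := fun p ↦ (fiberCard s f₁ p.1 : ℝ) * fiberCard s f₃ p.2)
    (b := fun p ↦ (fiberCard s f₂ p.1 : ℝ)⁻¹ * (fiberCard s f₁ p.1 : ℝ)⁻¹)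
    (c := fun p ↦ (fiberCard s f₂ p.1 : ℝ)⁻¹ * (fiberCard s f₂ p.1 : ℝ)⁻¹)
    (d := fun p ↦ (fiberCard s f₂ p.2 : ℝ)⁻¹ * (fiberCard s f₃ p.2 : ℝ)⁻¹)
    (fun _ _ ↦ by positivity) (fun _ _ ↦ by positivity)
    (fun _ _ ↦ by positivity) (fun _ _ ↦ by positivity) (by
      intro p hp
      simp only [fiberPairs, mem_filter, mem_product] at hp
      obtain ⟨⟨hp1, hp2⟩, he⟩ := hp
      have e : fiberCard s f₂ p.2 = fiberCard s f₂ p.1 := by simp only [fiberCard, he]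
      have p1 := (fiberCard_pos s hp1 (f := f₁)).ne'
      have p2 := (fiberCard_pos s hp1 (f := f₂)).ne'
      have p3 := (fiberCard_pos s hp2 (f := f₃)).ne'
      rw [e]
      field_simp)
  rw [hsum, ← hcard,
    sum_fiberPairs_fst s f₂ fun v ↦ (fiberCard s f₂ v : ℝ)⁻¹ * (fiberCard s f₁ v : ℝ)⁻¹,
    sum_fiberPairs_fst s f₂ fun v ↦ (fiberCard s f₂ v : ℝ)⁻¹ * (fiberCard s f₂ v : ℝ)⁻¹,
    sum_fiberPairs_snd s f₂ fun v ↦ (fiberCard s f₂ v : ℝ)⁻¹ * (fiberCard s f₃ v : ℝ)⁻¹,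
    cancel, cancel, cancel] at key
  refine key.trans ?_
  gcongr
  · exact sum_inv_fiberCard_le s h₁
  · exact sum_inv_fiberCard_le s h₂
  · exact sum_inv_fiberCard_le s h₃

end Counting

section SumDifference

variable {Z : Type*} [AddCommGroup Z] [DecidableEq Z]

/-- The chains of pairs of points of `G` with equal first coordinates used in the Katz–Tao
argument: successive pairs share both sums, then both second coordinates, then one of each. -/
def sumChains (G : Finset (Z × Z)) :
    Finset (Σ _ : ((Z × Z) × Z × Z) × (Z × Z) × Z × Z, ((Z × Z) × Z × Z) × (Z × Z) × Z × Z) :=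
  fiberChains (fiberPairs G Prod.fst)
    (fun v ↦ (v.1.1 + v.1.2, v.2.1 + v.2.2)) (fun v ↦ (v.1.2, v.2.2))
    (fun v ↦ (v.1.1 + v.1.2, v.2.2))

theorem card_sumChains_le {A B : Finset Z} {G : Finset (Z × Z)} (hG : G ⊆ A ×ˢ B) {M : ℝ}
    (hfib : ∀ z : Z, (#{p ∈ G | p.1 - p.2 = z} : ℝ) ≤ M) :
    (#(sumChains G) : ℝ) ≤ #(fiberPairs G Prod.fst) * (#A * #B) * M := by
  have hmaps : ∀ q ∈ sumChains G, (q.2.1, q.1.2.1.1, q.2.2.1.2) ∈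
      fiberPairs G Prod.fst ×ˢ A ×ˢ B := by
    intro q hq
    simp only [sumChains, fiberChains, mem_sigma, mem_product, mem_filter] at hq ⊢
    obtain ⟨h12, ⟨h0, -⟩, h3, -⟩ := hq
    simp only [fiberPairs, mem_filter, mem_product] at h12 h3
    exact ⟨h0, (mem_product.1 (hG h12.1.2.1.1)).1, (mem_product.1 (hG h3.1.1)).2⟩
  rw [card_eq_sum_card_fiberwise hmaps, Nat.cast_sum]
  have hb : ∀ b ∈ fiberPairs G Prod.fst ×ˢ A ×ˢ B,
      (#{q ∈ sumChains G | (q.2.1, q.1.2.1.1, q.2.2.1.2) = b} : ℝ) ≤ M := by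
    rintro ⟨⟨⟨x0, y0⟩, ⟨x0', y0'⟩⟩, x2, y3⟩ -
    refine le_trans ?_ (hfib (x2 - y3 + (y0 - y0')))
    rw [Nat.cast_le]
    refine card_le_card_of_injOn (fun q ↦ (q.2.2.1.1, q.2.2.2.2)) ?_ ?_
    · rintro ⟨⟨⟨⟨x1, y1⟩, ⟨x1', y1'⟩⟩, ⟨⟨x2, y2⟩, ⟨x2', y2'⟩⟩⟩,
        ⟨⟨⟨x0, y0⟩, ⟨x0', y0'⟩⟩, ⟨⟨x3, y3⟩, ⟨x3', y3'⟩⟩⟩⟩ hq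
      simp [sumChains, fiberChains, fiberPairs] at hq ⊢
      grind
    · rintro ⟨⟨⟨⟨x1, y1⟩, ⟨x1', y1'⟩⟩, ⟨⟨x2, y2⟩, ⟨x2', y2'⟩⟩⟩,
        ⟨⟨⟨x0, y0⟩, ⟨x0', y0'⟩⟩, ⟨⟨x3, y3⟩, ⟨x3', y3'⟩⟩⟩⟩ hq
        ⟨⟨⟨⟨u1, v1⟩, ⟨u1', v1'⟩⟩, ⟨⟨u2, v2⟩, ⟨u2', v2'⟩⟩⟩,
        ⟨⟨⟨u0, v0⟩, ⟨u0', v0'⟩⟩, ⟨⟨u3, v3⟩, ⟨u3', v3'⟩⟩⟩⟩ hr he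
      simp [sumChains, fiberChains, fiberPairs] at hq hr he ⊢
      grind
  refine (sum_le_sum hb).trans_eq ?_
  simp [card_product]

theorem card_pow_six_le {A B C : Finset Z} {G : Finset (Z × Z)} (hG : G ⊆ A ×ˢ B)
    (hC : ∀ p ∈ G, p.1 + p.2 ∈ C) {N M : ℝ} (hN : 0 ≤ N) (hM : 0 ≤ M)
    (hA : (#A : ℝ) ≤ N) (hB : (#B : ℝ) ≤ N) (hCN : (#C : ℝ) ≤ N)
    (hfib : ∀ z : Z, (#{p ∈ G | p.1 - p.2 = z} : ℝ) ≤ M) :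
    (#G : ℝ) ^ 6 ≤ M * N ^ 11 := by
  set V := fiberPairs G Prod.fst with hV
  have hVG : ∀ v ∈ V, v.1 ∈ G ∧ v.2 ∈ G := fun v hv ↦ by
    simp only [hV, fiberPairs, mem_filter, mem_product] at hv
    exact hv.1
  have hmemB : ∀ p ∈ G, p.2 ∈ B := fun p hp ↦ (mem_product.1 (hG hp)).2
  have h1 : (#G : ℝ) ^ 2 ≤ #V * N :=
    (card_sq_le_card_fiberPairs_mul G fun p hp ↦ (mem_product.1 (hG hp)).1).trans (by gcongr)
  have h2 : (#V : ℝ) ^ 4 ≤ #(sumChains G) * N ^ 6 := by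
    have := card_pow_four_le_card_fiberChains_mul V
      (f₁ := fun v ↦ (v.1.1 + v.1.2, v.2.1 + v.2.2)) (f₂ := fun v ↦ (v.1.2, v.2.2))
      (f₃ := fun v ↦ (v.1.1 + v.1.2, v.2.2)) (t₁ := C ×ˢ C) (t₂ := B ×ˢ B) (t₃ := C ×ˢ B)
      (fun v hv ↦ mem_product.2 ⟨hC v.1 (hVG v hv).1, hC v.2 (hVG v hv).2⟩)
      (fun v hv ↦ mem_product.2 ⟨hmemB v.1 (hVG v hv).1, hmemB v.2 (hVG v hv).2⟩)
      (fun v hv ↦ mem_product.2 ⟨hC v.1 (hVG v hv).1, hmemB v.2 (hVG v hv).2⟩)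
    simp only [card_product, Nat.cast_mul] at this
    calc (#V : ℝ) ^ 4 ≤ #(sumChains G) * (#C * #C) * (#B * #B * (#C * #B)) := this
      _ ≤ #(sumChains G) * (N * N) * (N * N * (N * N)) := by gcongr
      _ = #(sumChains G) * N ^ 6 := by ring
  have h3 : (#(sumChains G) : ℝ) ≤ #V * (N * N) * M :=
    (card_sumChains_le hG hfib).trans (by gcongr)
  have h4 : (#V : ℝ) ^ 3 ≤ N ^ 8 * M := by
    rcases (Nat.cast_nonneg (α := ℝ) #V).eq_or_lt with h | h
    · rw [← h, zero_pow three_ne_zero]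
      positivity
    · refine le_of_mul_le_mul_left ?_ h
      calc (#V : ℝ) * #V ^ 3 = #V ^ 4 := by ring
        _ ≤ #(sumChains G) * N ^ 6 := h2
        _ ≤ #V * (N * N) * M * N ^ 6 := by gcongr
        _ = #V * (N ^ 8 * M) := by ring
  calc (#G : ℝ) ^ 6 = (#G ^ 2) ^ 3 := by ring
    _ ≤ (#V * N) ^ 3 := by gcongr
    _ = #V ^ 3 * N ^ 3 := by ring
    _ ≤ N ^ 8 * M * N ^ 3 := by gcongr
    _ = M * N ^ 11 := by ring

end SumDifference

/-- a Katz–Tao type sum-difference estimate in a free abelian group. -/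
theorem statement10 (Z : Type*) [AddCommGroup Z] [Module.Free ℤ Z]
    (A B : Finset Z) (G : Finset (Z × Z)) (hG : G ⊆ A ×ˢ B)
    (N₀ M : ℝ) (hN₀ : 1 ≤ N₀) (hM : 1 ≤ M)
    (hA : (A.card : ℝ) ≤ N₀) (hB : (B.card : ℝ) ≤ N₀)
    (hC : (({z : Z | ∃ p ∈ G, p.1 + p.2 = z}).ncard : ℝ) ≤ N₀)
    (hfib : ∀ z : Z, (({p : Z × Z | p ∈ G ∧ p.1 - p.2 = z}).ncard : ℝ) ≤ M) :
    (G.card : ℝ) ≤ M ^ ((1 : ℝ) / 6) * N₀ ^ ((11 : ℝ) / 6) := by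
  classical
  have hM0 : 0 ≤ M := by linarith
  have hN0 : 0 ≤ N₀ := by linarith
  have hCimage : {z : Z | ∃ p ∈ G, p.1 + p.2 = z} = G.image fun p ↦ p.1 + p.2 := by
    ext; simp
  rw [hCimage, Set.ncard_coe_finset] at hC
  have hfib' : ∀ z : Z, (#{p ∈ G | p.1 - p.2 = z} : ℝ) ≤ M := fun z ↦ by
    rw [← Set.ncard_coe_finset, coe_filter]
    exact hfib z
  have h := card_pow_six_le hG (fun p hp ↦ mem_image_of_mem (fun p ↦ p.1 + p.2) hp)
    hN0 hM0 hA hB hC hfib'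
  refine le_of_pow_le_pow_left₀ (n := 6) (by norm_num) (by positivity) (h.trans_eq ?_)
  rw [mul_pow, ← Real.rpow_natCast (M ^ _), ← Real.rpow_natCast (N₀ ^ _), ← Real.rpow_mul hM0,
    ← Real.rpow_mul hN0]
  norm_num
end

section
/- Let n ≥ 2 be an integer and let E ⊆ ℝⁿ be Lebesgue measurable with λ(E) < ∞. (i) For every invertible linear map L : ℝⁿ → ℝⁿ and every v ∈ ℝⁿ, J_n(L(E) + v) = (det L)² · J_n(E). (ii) If E′ ⊆ ℝⁿ is Lebesgue measurable with λ(E △ E′) = 0, then J_n(E′) = J_n(E). In particular, the convexity index c(E) := J_n(E) / (n(n+1)·λ(E)²) (for 0 < λ(E) < ∞) is invariant under invertible affine transformations and under modification of E on a set of measure zero. -/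
open MeasureTheory
open scoped ENNReal

noncomputable section

/-- `Jn n E` is the `(n+1)`-st power of the `L^{n+1}` norm of the X-ray transform of the
indicator of `E`: the integral over directions `ξ` in the unit sphere (with the standard
unnormalized surface measure `volume.toSphere`) and points `x ∈ E` of the `n`-th power of
the length of the chord of `E` through `x` in direction `ξ`. -/
def Jn (n : ℕ) (E : Set (EuclideanSpace ℝ (Fin n))) : ℝ≥0∞ :=
  ∫⁻ ξ : Metric.sphere (0 : EuclideanSpace ℝ (Fin n)) 1,
    (∫⁻ x in E, (volume {t : ℝ | x + t • (ξ : EuclideanSpace ℝ (Fin n)) ∈ E}) ^ n)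
    ∂((volume : Measure (EuclideanSpace ℝ (Fin n))).toSphere)

theorem lintegral_inv_mul_indicator_Ioc {c : ℝ} (hc : 0 < c) :
    ∫⁻ r in Set.Ioi (0 : ℝ),
      ENNReal.ofReal r⁻¹ * (Set.Ioc (1 : ℝ) 2).indicator 1 (r * c) =
        ENNReal.ofReal (Real.log 2) := by
  have hle : 1 / c ≤ 2 / c := by gcongr; norm_num
  have hpos : 0 < 1 / c := by positivity
  have hset : ∀ r : ℝ, ENNReal.ofReal r⁻¹ * (Set.Ioc (1 : ℝ) 2).indicator 1 (r * c) =
      (Set.Ioc (1 / c) (2 / c)).indicator (fun r => ENNReal.ofReal r⁻¹) r := by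
    intro r
    have : r * c ∈ Set.Ioc (1 : ℝ) 2 ↔ r ∈ Set.Ioc (1 / c) (2 / c) := by
      rw [Set.mem_Ioc, Set.mem_Ioc, div_lt_iff₀ hc, le_div_iff₀ hc]
    by_cases h : r ∈ Set.Ioc (1 / c) (2 / c)
    · rw [Set.indicator_of_mem h, Set.indicator_of_mem (this.2 h), Pi.one_apply, mul_one]
    · rw [Set.indicator_of_notMem h, Set.indicator_of_notMem (mt this.1 h), mul_zero]
  simp only [hset]
  rw [setLIntegral_indicator measurableSet_Ioc, Set.inter_eq_left.2
    fun r hr => Set.mem_Ioi.2 (hpos.trans hr.1)]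
  have h0 : (0 : ℝ) ∉ Set.uIcc (1 / c) (2 / c) := by
    rw [Set.uIcc_of_le hle]
    exact fun h => absurd h.1 (not_le.2 hpos)
  have hint : IntervalIntegrable (fun r : ℝ => r⁻¹) volume (1 / c) (2 / c) :=
    intervalIntegral.intervalIntegrable_inv (fun x hx h => h0 (h ▸ hx)) continuousOn_id
  rw [← ofReal_integral_eq_lintegral_ofReal hint.1, ← intervalIntegral.integral_of_le hle,
    integral_inv h0]
  · congr 2
    field_simp
  · filter_upwards [ae_restrict_mem measurableSet_Ioc] with r hr
    exact inv_nonneg.2 (hpos.trans hr.1).le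

section InvariantMeasure

variable {V : Type*} [NormedAddCommGroup V] [NormedSpace ℝ V] [MeasurableSpace V] [BorelSpace V]
  [FiniteDimensional ℝ V] (μ : Measure V) [μ.IsAddHaarMeasure]

/-- Integration in polar coordinates. -/
theorem lintegral_eq_lintegral_toSphere [Nontrivial V] {f : V → ℝ≥0∞} (hf : Measurable f) :
    ∫⁻ u, f u ∂μ = ∫⁻ ξ : Metric.sphere (0 : V) 1, (∫⁻ r in Set.Ioi (0 : ℝ),
      ENNReal.ofReal (r ^ (Module.finrank ℝ V - 1)) * f (r • (ξ : V))) ∂μ.toSphere := by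
  have hsymm : Measurable fun p : Metric.sphere (0 : V) 1 × Set.Ioi (0 : ℝ) =>
      f ((p.2 : ℝ) • (p.1 : V)) := by fun_prop
  have hpolar := μ.measurePreserving_homeomorphUnitSphereProd.lintegral_comp hsymm
  have hcomp (x : ({0}ᶜ : Set V)) : ((homeomorphUnitSphereProd V x).2 : ℝ) •
      ((homeomorphUnitSphereProd V x).1 : V) = x := by
    exact congrArg Subtype.val ((homeomorphUnitSphereProd V).symm_apply_apply x)
  simp only [hcomp] at hpolar
  rw [lintegral_subtype_comap (measurableSet_singleton (0 : V)).compl f,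
    restrict_compl_singleton, lintegral_prod _ hsymm.aemeasurable] at hpolar
  rw [hpolar]
  refine lintegral_congr fun ξ => ?_
  rw [Measure.volumeIoiPow, lintegral_withDensity_eq_lintegral_mul _ (by fun_prop) (by fun_prop)]
  exact lintegral_subtype_comap measurableSet_Ioi
    (fun r : ℝ => ENNReal.ofReal (r ^ (Module.finrank ℝ V - 1)) * f (r • (ξ : V)))

theorem lintegral_comp_linearEquiv (M : V ≃ₗ[ℝ] V) {f : V → ℝ≥0∞} (hf : Measurable f) :
    ∫⁻ u, f (M u) ∂μ =
      ENNReal.ofReal |LinearMap.det (M.symm : V →ₗ[ℝ] V)| * ∫⁻ u, f u ∂μ := by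
  have hM : Measurable M := M.toContinuousLinearEquiv.continuous.measurable
  have hdet : LinearMap.det (M : V →ₗ[ℝ] V) ≠ 0 := M.isUnit_det'.ne_zero
  have hmap := Measure.map_linearMap_addHaar_eq_smul_addHaar μ hdet
  rw [← lintegral_map hf hM]
  change ∫⁻ u, f u ∂(Measure.map (M : V →ₗ[ℝ] V) μ) = _
  rw [hmap, lintegral_smul_measure, LinearEquiv.det_coe_symm, smul_eq_mul]

/-- For a function homogeneous of degree `-dim V`, its integral over any (linearly distorted)
spherical shell is proportional to its integral over the unit sphere. -/
theorem lintegral_mul_indicator_norm_of_homogeneous [Nontrivial V] {g : V → ℝ≥0∞}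
    (hg : Measurable g)
    (hhom : ∀ r : ℝ, 0 < r → ∀ u, g (r • u) = ENNReal.ofReal r⁻¹ ^ Module.finrank ℝ V * g u)
    (M : V ≃ₗ[ℝ] V) :
    ∫⁻ u, g u * (Set.Ioc (1 : ℝ) 2).indicator 1 ‖M u‖ ∂μ =
      ENNReal.ofReal (Real.log 2) * ∫⁻ ξ : Metric.sphere (0 : V) 1, g ξ ∂μ.toSphere := by
  have hM : Measurable M := M.toContinuousLinearEquiv.continuous.measurable
  have hind : Measurable ((Set.Ioc (1 : ℝ) 2).indicator (1 : ℝ → ℝ≥0∞)) :=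
    measurable_one.indicator measurableSet_Ioc
  rw [lintegral_eq_lintegral_toSphere μ (by fun_prop), ← lintegral_const_mul _ (by fun_prop)]
  refine lintegral_congr fun ξ => ?_
  have hξ : (ξ : V) ≠ 0 := ne_zero_of_mem_unit_sphere ξ
  have hc : 0 < ‖M ξ‖ := norm_pos_iff.2 (by simpa using hξ)
  rw [← lintegral_inv_mul_indicator_Ioc hc, ← lintegral_mul_const _ (by fun_prop)]
  refine setLIntegral_congr_fun measurableSet_Ioi fun r hr => ?_
  have hr : 0 < r := hr
  have hweight : ENNReal.ofReal (r ^ (Module.finrank ℝ V - 1)) *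
      ENNReal.ofReal r⁻¹ ^ Module.finrank ℝ V = ENNReal.ofReal r⁻¹ := by
    obtain ⟨k, hk⟩ := Nat.exists_eq_succ_of_ne_zero (Module.finrank_pos (R := ℝ) (M := V)).ne'
    rw [← ENNReal.ofReal_pow (by positivity), ← ENNReal.ofReal_mul (by positivity), hk]
    congr 1
    rw [Nat.succ_sub_one, pow_succ, ← mul_assoc, ← mul_pow, mul_inv_cancel₀ hr.ne', one_pow,
      one_mul]
  simp only [hhom r hr, map_smul, norm_smul, Real.norm_of_nonneg hr.le]
  rw [← mul_assoc, ← mul_assoc, hweight, mul_right_comm]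

theorem lintegral_toSphere_comp_linearEquiv [Nontrivial V] {g : V → ℝ≥0∞}
    (hg : Measurable g)
    (hhom : ∀ r : ℝ, 0 < r → ∀ u, g (r • u) = ENNReal.ofReal r⁻¹ ^ Module.finrank ℝ V * g u)
    (M : V ≃ₗ[ℝ] V) :
    ∫⁻ ξ : Metric.sphere (0 : V) 1, g (M ξ) ∂μ.toSphere =
      ENNReal.ofReal |LinearMap.det (M.symm : V →ₗ[ℝ] V)| *
        ∫⁻ ξ : Metric.sphere (0 : V) 1, g ξ ∂μ.toSphere := by
  have hM : Measurable M := M.toContinuousLinearEquiv.continuous.measurable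
  have hM' : Measurable M.symm := M.symm.toContinuousLinearEquiv.continuous.measurable
  have hind : Measurable ((Set.Ioc (1 : ℝ) 2).indicator (1 : ℝ → ℝ≥0∞)) :=
    measurable_one.indicator measurableSet_Ioc
  have hlog : ENNReal.ofReal (Real.log 2) ≠ 0 := by
    simpa using Real.log_pos one_lt_two
  have h₁ := lintegral_mul_indicator_norm_of_homogeneous μ (g := fun u => g (M u))
    (by fun_prop) (fun r hr u => by simp only [map_smul, hhom r hr]) (.refl ℝ V)
  have h₂ := lintegral_mul_indicator_norm_of_homogeneous μ hg hhom M.symm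
  have h₃ := lintegral_comp_linearEquiv μ M
    (f := fun u => g u * (Set.Ioc (1 : ℝ) 2).indicator 1 ‖M.symm u‖) (by fun_prop)
  simp only [LinearEquiv.symm_apply_apply] at h₃
  simp only [LinearEquiv.refl_apply] at h₁
  rw [← ENNReal.mul_right_inj hlog ENNReal.ofReal_ne_top, ← h₁, h₃, h₂, mul_left_comm]

end InvariantMeasure

section Chord

variable {n : ℕ}

/-- The integral over `x ∈ E` of the `n`-th power of the length of the chord of `E` through `x`
in the direction `u`, length being measured in multiples of `u`. -/
def chordPowerIntegral (E : Set (EuclideanSpace ℝ (Fin n))) (u : EuclideanSpace ℝ (Fin n)) :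
    ℝ≥0∞ :=
  ∫⁻ x in E, (volume {t : ℝ | x + t • u ∈ E}) ^ n

variable {E : Set (EuclideanSpace ℝ (Fin n))}

theorem measurable_volume_chord (hE : MeasurableSet E) :
    Measurable fun p : EuclideanSpace ℝ (Fin n) × EuclideanSpace ℝ (Fin n) =>
      volume {t : ℝ | p.2 + t • p.1 ∈ E} := by
  have hmap : Measurable fun q : (EuclideanSpace ℝ (Fin n) × EuclideanSpace ℝ (Fin n)) × ℝ =>
      q.1.2 + q.2 • q.1.1 := by fun_prop
  exact measurable_measure_prodMk_left (hmap hE)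

theorem measurable_chordPowerIntegral (hE : MeasurableSet E) :
    Measurable (chordPowerIntegral E) :=
  ((measurable_volume_chord hE).pow_const n).lintegral_prod_right'

theorem chordPowerIntegral_smul (hE : MeasurableSet E) {r : ℝ} (hr : 0 < r)
    (u : EuclideanSpace ℝ (Fin n)) :
    chordPowerIntegral E (r • u) = ENNReal.ofReal r⁻¹ ^ n * chordPowerIntegral E u := by
  have hmeas : Measurable fun x => (volume {t : ℝ | x + t • u ∈ E}) ^ n :=
    ((measurable_volume_chord hE).comp (measurable_prodMk_left (x := u))).pow_const n
  rw [chordPowerIntegral, chordPowerIntegral, ← lintegral_const_mul _ hmeas]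
  refine lintegral_congr fun x => ?_
  have := Real.volume_preimage_mul_right hr.ne' {t : ℝ | x + t • u ∈ E}
  rw [abs_of_pos (inv_pos.2 hr)] at this
  rw [← mul_pow, ← this]
  simp only [smul_smul]
  rfl

theorem chordPowerIntegral_image_affine (hE : MeasurableSet E)
    (L : EuclideanSpace ℝ (Fin n) ≃ₗ[ℝ] EuclideanSpace ℝ (Fin n))
    (v u : EuclideanSpace ℝ (Fin n)) :
    chordPowerIntegral ((fun x => L x + v) '' E) u =
      ENNReal.ofReal |LinearMap.det (L : EuclideanSpace ℝ (Fin n) →ₗ[ℝ] _)| *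
        chordPowerIntegral E (L.symm u) := by
  have himage : (fun x => L x + v) '' E = (fun y => L.symm (y - v)) ⁻¹' E := by
    ext y
    constructor
    · rintro ⟨x, hx, rfl⟩
      simpa using hx
    · intro hy
      exact ⟨_, hy, by simp⟩
  have hL : Measurable L.symm := L.symm.toContinuousLinearEquiv.continuous.measurable
  have hmeas : Measurable fun x => (volume {t : ℝ | x + t • L.symm u ∈ E}) ^ n :=
    ((measurable_volume_chord hE).comp (measurable_prodMk_left (x := L.symm u))).pow_const n
  have hpre : MeasurableSet ((fun y => L.symm (y - v)) ⁻¹' E) :=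
    (show Measurable fun y => L.symm (y - v) by fun_prop) hE
  set h : EuclideanSpace ℝ (Fin n) → ℝ≥0∞ :=
    E.indicator fun x => (volume {t : ℝ | x + t • L.symm u ∈ E}) ^ n with hh
  have hhm : Measurable h := hmeas.indicator hE
  rw [himage, chordPowerIntegral, chordPowerIntegral, ← lintegral_indicator hpre,
    ← lintegral_indicator hE, ← hh]
  have hcov := lintegral_comp_linearEquiv volume L.symm hhm
  rw [LinearEquiv.symm_symm] at hcov
  rw [← hcov, ← lintegral_sub_right_eq_self (fun y => h (L.symm y)) v]
  refine lintegral_congr fun y => ?_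
  have hline (t : ℝ) : L.symm (y + t • u - v) = L.symm (y - v) + t • L.symm u := by
    rw [add_sub_right_comm, map_add, map_smul]
  simp only [hh, Set.indicator, Set.mem_preimage, hline]
  rfl

theorem chordPowerIntegral_congr_ae {E' : Set (EuclideanSpace ℝ (Fin n))}
    (h : E' =ᵐ[volume] E) (u : EuclideanSpace ℝ (Fin n)) :
    chordPowerIntegral E' u = chordPowerIntegral E u := by
  have hline : ∀ᵐ x : EuclideanSpace ℝ (Fin n), ∀ᵐ t : ℝ, (x + t • u ∈ E' ↔ x + t • u ∈ E) := by
    have hqmp : Measure.QuasiMeasurePreserving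
        (fun p : ℝ × EuclideanSpace ℝ (Fin n) => p.2 + p.1 • u)
        ((volume : Measure ℝ).prod volume) volume := by
      refine ⟨by fun_prop, .mk fun s hs h0 => ?_⟩
      rw [Measure.map_apply (by fun_prop) hs,
        Measure.measure_prod_null ((show Measurable
          fun p : ℝ × EuclideanSpace ℝ (Fin n) => p.2 + p.1 • u by fun_prop) hs)]
      refine .of_forall fun t => ?_
      exact (measure_preimage_add_right volume (t • u) s).trans h0
    have hprod := hqmp.ae h.mem_iff
    have hswap := (Measure.measurePreserving_swap (μ := (volume : Measure
      (EuclideanSpace ℝ (Fin n)))) (ν := (volume : Measure ℝ))).quasiMeasurePreserving.ae hprod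
    exact Measure.ae_ae_of_ae_prod hswap
  rw [chordPowerIntegral, chordPowerIntegral, setLIntegral_congr h]
  refine lintegral_congr_ae (ae_restrict_of_ae ?_)
  filter_upwards [hline] with x hx
  have hchord : {t : ℝ | x + t • u ∈ E'} =ᵐ[volume] {t : ℝ | x + t • u ∈ E} :=
    Filter.eventuallyEq_set.2 hx
  rw [measure_congr hchord]

end Chord

/-- invariance of `Jn` (hence of the convexity index) under invertible affine
transformations and under modification on a null set. -/
theorem statement11 (n : ℕ) (hn : 2 ≤ n) (E : Set (EuclideanSpace ℝ (Fin n)))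
    (hE : MeasurableSet E) (hfin : volume E < ⊤) :
    (∀ L : EuclideanSpace ℝ (Fin n) →ₗ[ℝ] EuclideanSpace ℝ (Fin n),
      Function.Bijective L →
      ∀ v : EuclideanSpace ℝ (Fin n),
        Jn n ((fun x => L x + v) '' E) =
          ENNReal.ofReal ((LinearMap.det L) ^ 2) * Jn n E) ∧
    (∀ E' : Set (EuclideanSpace ℝ (Fin n)), MeasurableSet E' →
      volume (symmDiff E E') = 0 → Jn n E' = Jn n E) := by
  have : NeZero n := ⟨by omega⟩
  refine ⟨fun L hL v => ?_, fun E' _ hnull => ?_⟩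
  · obtain ⟨L, rfl⟩ : ∃ L' : EuclideanSpace ℝ (Fin n) ≃ₗ[ℝ] EuclideanSpace ℝ (Fin n),
        (L' : EuclideanSpace ℝ (Fin n) →ₗ[ℝ] EuclideanSpace ℝ (Fin n)) = L :=
      ⟨.ofBijective L hL, rfl⟩
    change ∫⁻ ξ : Metric.sphere (0 : EuclideanSpace ℝ (Fin n)) 1,
        chordPowerIntegral ((fun x => L x + v) '' E) ξ ∂_ =
      _ * ∫⁻ ξ : Metric.sphere (0 : EuclideanSpace ℝ (Fin n)) 1, chordPowerIntegral E ξ ∂_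
    have hcov := lintegral_toSphere_comp_linearEquiv volume (measurable_chordPowerIntegral hE)
      (fun r hr u => by rw [finrank_euclideanSpace_fin, chordPowerIntegral_smul hE hr]) L.symm
    rw [LinearEquiv.symm_symm] at hcov
    simp only [chordPowerIntegral_image_affine hE]
    rw [lintegral_const_mul' _ _ ENNReal.ofReal_ne_top, hcov, ← mul_assoc,
      ← ENNReal.ofReal_mul (abs_nonneg _), abs_mul_abs_self, pow_two]
  · have hae : E' =ᵐ[volume] E := (measure_symmDiff_eq_zero_iff.1 hnull).symm
    exact lintegral_congr fun ξ => chordPowerIntegral_congr_ae hae ξ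
end
end

section
/- Let n ≥ 2 be an integer and let E ⊆ ℝⁿ be Lebesgue measurable with λ(E) < ∞. Then J_n(E) ≤ n(n+1) · λ(E)². -/
open MeasureTheory
open scoped ENNReal

noncomputable section

open Set Filter Topology

/-- Integration in polar coordinates for the Lebesgue integral. -/
theorem lintegral_toSphere_lintegral_smul {V : Type*} [NormedAddCommGroup V] [NormedSpace ℝ V]
    [FiniteDimensional ℝ V] [MeasurableSpace V] [BorelSpace V] (μ : Measure V) [μ.IsAddHaarMeasure]
    (hV : 2 ≤ Module.finrank ℝ V) {f : V → ℝ≥0∞} (hf : Measurable f) :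
    ∫⁻ ξ : Metric.sphere (0 : V) 1,
      (∫⁻ t : ℝ, f (t • (ξ : V)) * ENNReal.ofReal t ^ (Module.finrank ℝ V - 1)) ∂μ.toSphere =
    ∫⁻ x, f x ∂μ := by
  have : Nontrivial V := Module.nontrivial_of_finrank_pos (R := ℝ) (by lia)
  set k := Module.finrank ℝ V - 1 with hk
  have hk0 : k ≠ 0 := by lia
  have hmp := μ.measurePreserving_homeomorphUnitSphereProd
  rw [← hk] at hmp
  have hg : Measurable fun p : Metric.sphere (0 : V) 1 × Ioi (0 : ℝ) ↦
      f ((p.2 : ℝ) • (p.1 : V)) := by fun_prop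
  calc
    _ = ∫⁻ ξ : Metric.sphere (0 : V) 1,
        (∫⁻ r : Ioi (0 : ℝ), f ((r : ℝ) • (ξ : V)) ∂Measure.volumeIoiPow k) ∂μ.toSphere := by
      refine lintegral_congr fun ξ ↦ ?_
      rw [Measure.volumeIoiPow, lintegral_withDensity_eq_lintegral_mul _ (by fun_prop)
        (by fun_prop)]
      simp only [Pi.mul_apply]
      rw [lintegral_subtype_comap measurableSet_Ioi
        fun r : ℝ ↦ ENNReal.ofReal (r ^ k) * f (r • (ξ : V)),
        ← lintegral_indicator measurableSet_Ioi]
      refine lintegral_congr fun t ↦ ?_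
      by_cases ht : 0 < t
      · simp [ht, ENNReal.ofReal_pow ht.le, mul_comm]
      · simp [ht, ENNReal.ofReal_of_nonpos (not_lt.1 ht), hk0]
    _ = ∫⁻ p : Metric.sphere (0 : V) 1 × Ioi (0 : ℝ), f ((p.2 : ℝ) • (p.1 : V))
        ∂(μ.toSphere.prod (Measure.volumeIoiPow k)) := (lintegral_prod _ hg.aemeasurable).symm
    _ = ∫⁻ x : ({0}ᶜ : Set V), f x ∂(μ.comap (↑)) := by
      rw [← hmp.lintegral_comp hg]
      refine lintegral_congr fun x ↦ ?_
      congr 1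
      exact congrArg Subtype.val ((homeomorphUnitSphereProd V).symm_apply_apply x)
    _ = ∫⁻ x, f x ∂μ := by
      rw [lintegral_subtype_comap (measurableSet_singleton _).compl f,
        restrict_compl_singleton]

theorem setLIntegral_Icc_ofReal_sub_pow {k : ℕ} (hk : k ≠ 0) {u m : ℝ} (hu : u ∈ Icc 0 m) :
    ∫⁻ v in Icc 0 m, ENNReal.ofReal (v - u) ^ k =
      ENNReal.ofReal ((m - u) ^ (k + 1) / (k + 1)) := by
  have h1 : ∫⁻ v in Icc 0 m, ENNReal.ofReal (v - u) ^ k =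
      ∫⁻ v in Ioc u m, ENNReal.ofReal ((v - u) ^ k) := by
    rw [← lintegral_indicator measurableSet_Icc, ← lintegral_indicator measurableSet_Ioc]
    refine lintegral_congr fun v ↦ ?_
    by_cases hv : u < v
    · have h0 : 0 ≤ v := hu.1.trans hv.le
      by_cases hvm : v ≤ m <;> simp [indicator, hv, hvm, h0, ENNReal.ofReal_pow, hv.le]
    · simp [indicator, hv, ENNReal.ofReal_of_nonpos (sub_nonpos.2 (not_lt.1 hv)), hk]
  rw [h1, ← ofReal_integral_eq_lintegral_ofReal, ← intervalIntegral.integral_of_le hu.2]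
  · rw [intervalIntegral.integral_comp_sub_right (fun x ↦ x ^ k) u]
    simp
  · exact (Continuous.intervalIntegrable (by fun_prop) u m).1
  · filter_upwards [ae_restrict_mem measurableSet_Ioc] with v hv
    exact pow_nonneg (sub_nonneg.2 hv.1.le) _

theorem setLIntegral_Icc_setLIntegral_Icc_ofReal_sub_pow {k : ℕ} (hk : k ≠ 0) {m : ℝ}
    (hm : 0 ≤ m) :
    ∫⁻ u in Icc 0 m, ∫⁻ v in Icc 0 m, ENNReal.ofReal (v - u) ^ k =
      ENNReal.ofReal (m ^ (k + 2) / ((k + 1) * (k + 2))) := by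
  rw [setLIntegral_congr_fun measurableSet_Icc
    fun u hu ↦ setLIntegral_Icc_ofReal_sub_pow hk hu,
    ← ofReal_integral_eq_lintegral_ofReal, integral_Icc_eq_integral_Ioc,
    ← intervalIntegral.integral_of_le hm]
  · rw [intervalIntegral.integral_comp_sub_left (fun x ↦ x ^ (k + 1) / ((k : ℝ) + 1)) m]
    simp only [sub_self, sub_zero, intervalIntegral.integral_div, integral_pow]
    congr 1
    push_cast
    field_simp
    ring
  · exact (Continuous.continuousOn (by fun_prop)).integrableOn_Icc
  · filter_upwards [ae_restrict_mem measurableSet_Icc] with u hu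
    have := sub_nonneg.2 hu.2
    positivity

theorem measureReal_inter_Iic_sub_le {F : Set ℝ} (hfin : volume F ≠ ∞)
    {s t : ℝ} (hst : s ≤ t) :
    volume.real (F ∩ Iic t) - volume.real (F ∩ Iic s) ≤ t - s := by
  have hF (A : Set ℝ) : volume (F ∩ A) ≠ ∞ := measure_ne_top_of_subset inter_subset_left hfin
  have h1 : volume.real (F ∩ Iic t) ≤ volume.real (F ∩ Iic s) + volume.real (F ∩ Ioc s t) := by
    rw [← Iic_union_Ioc_eq_Iic hst, inter_union_distrib_left]
    exact measureReal_union_le _ _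
  have h2 : volume.real (F ∩ Ioc s t) ≤ volume.real (Ioc s t) :=
    measureReal_mono inter_subset_right (by simp)
  rw [Real.volume_real_Ioc_of_le hst] at h2
  linarith

theorem monotone_measureReal_inter_Iic {F : Set ℝ} (hfin : volume F ≠ ∞) :
    Monotone fun s ↦ volume.real (F ∩ Iic s) := fun _ _ hst ↦
  measureReal_mono (inter_subset_inter_right _ (Iic_subset_Iic.2 hst))
    (measure_ne_top_of_subset inter_subset_left hfin)

theorem continuous_measureReal_inter_Iic {F : Set ℝ} (hfin : volume F ≠ ∞) :
    Continuous fun s ↦ volume.real (F ∩ Iic s) := by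
  refine LipschitzWith.continuous (K := 1) (LipschitzWith.of_le_add fun s t ↦ ?_)
  rcases le_total s t with h | h
  · exact (monotone_measureReal_inter_Iic hfin h).trans (le_add_of_nonneg_right dist_nonneg)
  · have := measureReal_inter_Iic_sub_le hfin h
    rw [Real.dist_eq, abs_of_nonneg (sub_nonneg.2 h)]
    linarith

/-- The distribution function of a set of finite measure pushes the restriction of Lebesgue measure
to this set forward to Lebesgue measure on an interval. -/
theorem map_measureReal_inter_Iic {F : Set ℝ} (hfin : volume F ≠ ∞) :
    (volume.restrict F).map (fun s ↦ volume.real (F ∩ Iic s)) =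
      volume.restrict (Icc 0 (volume.real F)) := by
  set φ : ℝ → ℝ := fun s ↦ volume.real (F ∩ Iic s) with hφ
  have hmono : Monotone φ := monotone_measureReal_inter_Iic hfin
  have hcont : Continuous φ := continuous_measureReal_inter_Iic hfin
  have hle (s : ℝ) : φ s ≤ volume.real F := measureReal_mono inter_subset_left hfin
  have : IsFiniteMeasure (volume.restrict F) := ⟨by simpa using hfin.lt_top⟩
  have hφ' (s : ℝ) : φ s = (volume.restrict F).real (Iic s) := by
    rw [measureReal_restrict_apply measurableSet_Iic, inter_comm]
  have htop : Tendsto φ atTop (𝓝 (volume.real F)) := by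
    have := (ENNReal.tendsto_toReal (by simpa using hfin)).comp
      (tendsto_measure_Iic_atTop (volume.restrict F))
    rw [Measure.restrict_apply_univ] at this
    exact this.congr fun s ↦ (hφ' s).symm
  have hbot : Tendsto φ atBot (𝓝 0) := by
    have := tendsto_measure_iInter_atBot (μ := volume.restrict F) (s := Iic)
      (fun s ↦ measurableSet_Iic.nullMeasurableSet) monotone_Iic ⟨0, measure_ne_top _ _⟩
    rw [iInter_Iic_eq_empty_iff.2 (by simp [not_bddBelow_univ]), measure_empty] at this
    exact ((ENNReal.tendsto_toReal ENNReal.zero_ne_top).comp this).congr fun s ↦ (hφ' s).symm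
  refine Measure.ext_of_Iic _ _ fun a ↦ ?_
  rw [Measure.map_apply hcont.measurable measurableSet_Iic,
    Measure.restrict_apply (hcont.measurable measurableSet_Iic),
    Measure.restrict_apply measurableSet_Iic]
  rcases le_or_gt (volume.real F) a with ha | ha
  · have h1 : φ ⁻¹' Iic a = univ := eq_univ_of_forall fun s ↦ (hle s).trans ha
    have h2 : Iic a ∩ Icc 0 (volume.real F) = Icc 0 (volume.real F) :=
      inter_eq_right.2 fun x hx ↦ hx.2.trans ha
    rw [h1, h2, univ_inter, Real.volume_Icc, sub_zero, ofReal_measureReal hfin]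
  rcases (φ ⁻¹' Iic a).eq_empty_or_nonempty with he | ⟨b, hb⟩
  · have h1 : a ≤ 0 := ge_of_tendsto' hbot fun s ↦
      (not_le.1 fun h ↦ eq_empty_iff_forall_notMem.1 he s h).le
    have h2 : Iic a ∩ Icc 0 (volume.real F) ⊆ {0} := fun x hx ↦
      le_antisymm (hx.1.trans h1) hx.2.1
    rw [he, empty_inter, measure_empty, measure_mono_null h2 (measure_singleton _)]
  obtain ⟨d, hd⟩ := (htop.eventually (lt_mem_nhds ha)).exists
  have hbdd : BddAbove (φ ⁻¹' Iic a) := ⟨d, fun s hs ↦ (hmono.reflect_lt (lt_of_le_of_lt hs hd)).le⟩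
  set c := sSup (φ ⁻¹' Iic a)
  have hc : φ c ≤ a := (isClosed_Iic.preimage hcont).csSup_mem ⟨b, hb⟩ hbdd
  have hca : φ c = a := by
    obtain ⟨x, -, hx⟩ := intermediate_value_Icc (hmono.reflect_lt (hc.trans_lt hd)).le
      hcont.continuousOn ⟨hc, hd.le⟩
    exact hc.antisymm (hx.ge.trans (hmono (le_csSup hbdd hx.le)))
  have h1 : φ ⁻¹' Iic a = Iic c :=
    Subset.antisymm (fun s hs ↦ le_csSup hbdd hs) fun s hs ↦ (hmono hs).trans hc
  have h2 : Iic a ∩ Icc 0 (volume.real F) = Icc 0 a := by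
    ext x
    exact ⟨fun hx ↦ ⟨hx.2.1, hx.1⟩, fun hx ↦ ⟨hx.2, hx.1, hx.2.trans ha.le⟩⟩
  rw [h1, h2, Real.volume_Icc, sub_zero, ← hca, inter_comm, hφ, ofReal_measureReal
    (measure_ne_top_of_subset inter_subset_left hfin)]

theorem pow_volume_le_lintegral_of_ne_top {k : ℕ} (hk : k ≠ 0) {F : Set ℝ} (hfin : volume F ≠ ∞) :
    volume F ^ (k + 2) ≤ ((k : ℝ≥0∞) + 1) * (k + 2) *
      ∫⁻ s in F, ∫⁻ t in F, ENNReal.ofReal (t - s) ^ k := by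
  set m := volume.real F with hm
  set φ : ℝ → ℝ := fun s ↦ volume.real (F ∩ Iic s) with hφ
  have hφm : Measurable φ := (continuous_measureReal_inter_Iic hfin).measurable
  have hmap : (volume.restrict F).map φ = volume.restrict (Icc 0 m) :=
    map_measureReal_inter_Iic hfin
  have hm0 : 0 ≤ m := measureReal_nonneg
  have hK : Measurable fun p : ℝ × ℝ ↦ ENNReal.ofReal (p.2 - p.1) ^ k := by fun_prop
  have hK' : Measurable fun u : ℝ ↦ ∫⁻ v in Icc 0 m, ENNReal.ofReal (v - u) ^ k :=
    hK.lintegral_prod_right'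
  calc
    volume F ^ (k + 2) = ((k : ℝ≥0∞) + 1) * (k + 2) *
        ENNReal.ofReal (m ^ (k + 2) / ((k + 1) * (k + 2))) := by
      have h1 : ((k : ℝ≥0∞) + 1) * (k + 2) = ENNReal.ofReal (((k : ℝ) + 1) * (k + 2)) := by
        rw [ENNReal.ofReal_mul (by positivity), ENNReal.ofReal_add (by positivity) (by positivity),
          ENNReal.ofReal_add (by positivity) (by positivity)]
        simp
      rw [h1, ← ENNReal.ofReal_mul (by positivity), mul_div_cancel₀ _ (by positivity),
        ENNReal.ofReal_pow hm0, ofReal_measureReal hfin]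
    _ = ((k : ℝ≥0∞) + 1) * (k + 2) *
        ∫⁻ s in F, ∫⁻ t in F, ENNReal.ofReal (φ t - φ s) ^ k := by
      rw [← setLIntegral_Icc_setLIntegral_Icc_ofReal_sub_pow hk hm0, ← hmap,
        lintegral_map (by rw [hmap]; exact hK') hφm]
      congr 1
      refine lintegral_congr fun s ↦ ?_
      rw [lintegral_map (by fun_prop) hφm]
    _ ≤ _ := by
      refine mul_le_mul_right (lintegral_mono fun s ↦ lintegral_mono fun t ↦
        pow_le_pow_left₀ zero_le ?_ k) _
      rcases le_total s t with h | h
      · exact ENNReal.ofReal_le_ofReal (measureReal_inter_Iic_sub_le hfin h)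
      · rw [ENNReal.ofReal_of_nonpos (sub_nonpos.2 (monotone_measureReal_inter_Iic hfin h))]
        exact zero_le

theorem pow_volume_le_lintegral {k : ℕ} (hk : k ≠ 0) (F : Set ℝ) :
    volume F ^ (k + 2) ≤ ((k : ℝ≥0∞) + 1) * (k + 2) *
      ∫⁻ s in F, ∫⁻ t in F, ENNReal.ofReal (t - s) ^ k := by
  have hmono : Monotone fun N : ℕ ↦ F ∩ Icc (-N : ℝ) N := fun M N h ↦ by
    have : (M : ℝ) ≤ N := mod_cast h
    dsimp only
    gcongr
  have hU : ⋃ N : ℕ, F ∩ Icc (-N : ℝ) N = F := by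
    rw [← inter_iUnion, inter_eq_left]
    intro x _
    obtain ⟨N, hN⟩ := exists_nat_ge |x|
    exact mem_iUnion.2 ⟨N, abs_le.1 hN⟩
  have hlim := tendsto_measure_iUnion_atTop (μ := volume) hmono
  rw [hU] at hlim
  refine le_of_tendsto' (ENNReal.Tendsto.pow hlim) fun N ↦ ?_
  refine (pow_volume_le_lintegral_of_ne_top hk
    (measure_ne_top_of_subset inter_subset_right (by simp))).trans ?_
  gcongr <;> exact inter_subset_left

section Slicing

variable {V : Type*} [NormedAddCommGroup V] [InnerProductSpace ℝ V] [FiniteDimensional ℝ V]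
  [MeasurableSpace V] [BorelSpace V]

/-- The slab orthogonal to a unit vector of width one meets every line in the direction
of this vector in a segment of length one, so integrals can be computed by averaging over lines. -/
theorem setLIntegral_slab_lintegral_add_smul (μ : Measure V) [μ.IsAddHaarMeasure] {ξ : V}
    (hξ : ‖ξ‖ = 1) {g : V → ℝ≥0∞} (hg : Measurable g) :
    ∫⁻ x in {x | inner ℝ ξ x ∈ Icc (0 : ℝ) 1}, (∫⁻ s : ℝ, g (x + s • ξ)) ∂μ = ∫⁻ x, g x ∂μ := by
  set W : Set V := {x | inner ℝ ξ x ∈ Icc (0 : ℝ) 1}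
  have hW : MeasurableSet W := (isClosed_Icc.preimage (by fun_prop)).measurableSet
  have hw : Measurable (W.indicator (1 : V → ℝ≥0∞)) := measurable_one.indicator hW
  calc
    _ = ∫⁻ x, (∫⁻ s : ℝ, W.indicator 1 x * g (x + s • ξ)) ∂μ := by
      rw [← lintegral_indicator hW]
      refine lintegral_congr fun x ↦ ?_
      rw [lintegral_const_mul _ (by fun_prop)]
      by_cases hx : x ∈ W <;> simp [hx]
    _ = ∫⁻ s : ℝ, (∫⁻ x, W.indicator 1 x * g (x + s • ξ) ∂μ) :=
      lintegral_lintegral_swap (by unfold Function.uncurry; fun_prop)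
    _ = ∫⁻ s : ℝ, (∫⁻ x, W.indicator 1 (x - s • ξ) * g x ∂μ) := by
      refine lintegral_congr fun s ↦ ?_
      simpa using lintegral_add_right_eq_self (μ := μ)
        (fun x ↦ W.indicator 1 (x - s • ξ) * g x) (s • ξ)
    _ = ∫⁻ x, (∫⁻ s : ℝ, W.indicator 1 (x - s • ξ) * g x) ∂μ :=
      lintegral_lintegral_swap (by unfold Function.uncurry; fun_prop)
    _ = ∫⁻ x, g x ∂μ := by
      refine lintegral_congr fun x ↦ ?_
      rw [lintegral_mul_const _ (by fun_prop)]
      have h1 (s : ℝ) : W.indicator (1 : V → ℝ≥0∞) (x - s • ξ) =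
          (Icc (inner ℝ ξ x - 1) (inner ℝ ξ x)).indicator 1 s := by
        have : x - s • ξ ∈ W ↔ s ∈ Icc (inner ℝ ξ x - 1) (inner ℝ ξ x) := by
          simp only [W, mem_ofPred_eq, inner_sub_right, inner_smul_right, real_inner_self_eq_norm_sq,
            hξ, mem_Icc]
          constructor <;> rintro ⟨h, h'⟩ <;> constructor <;> linarith
        by_cases hs : s ∈ Icc (inner ℝ ξ x - 1) (inner ℝ ξ x)
        · rw [indicator_of_mem hs, indicator_of_mem (this.2 hs)]; rfl
        · rw [indicator_of_notMem hs, indicator_of_notMem (mt this.1 hs)]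
      simp_rw [h1]
      rw [lintegral_indicator_one measurableSet_Icc]
      simp

theorem setLIntegral_volume_chord_pow_le (μ : Measure V) [μ.IsAddHaarMeasure] {k : ℕ} (hk : k ≠ 0)
    {E : Set V} (hE : MeasurableSet E) {ξ : V} (hξ : ‖ξ‖ = 1) :
    ∫⁻ x in E, volume {t : ℝ | x + t • ξ ∈ E} ^ (k + 1) ∂μ ≤
      ((k : ℝ≥0∞) + 1) * (k + 2) * ∫⁻ x in E,
        (∫⁻ t : ℝ, E.indicator 1 (x + t • ξ) * ENNReal.ofReal t ^ k) ∂μ := by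
  have hind : Measurable (E.indicator (1 : V → ℝ≥0∞)) := measurable_one.indicator hE
  have hF (x : V) : MeasurableSet {t : ℝ | x + t • ξ ∈ E} :=
    (show Measurable fun t : ℝ ↦ x + t • ξ by fun_prop) hE
  have hindF (x : V) (t : ℝ) : E.indicator (1 : V → ℝ≥0∞) (x + t • ξ) =
      {t : ℝ | x + t • ξ ∈ E}.indicator 1 t := rfl
  have hvol (x : V) : volume {t : ℝ | x + t • ξ ∈ E} =
      ∫⁻ t : ℝ, E.indicator 1 (x + t • ξ) := by
    simp_rw [hindF]
    rw [lintegral_indicator_one (hF x)]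
  have hset (f : V → ℝ≥0∞) : ∫⁻ x in E, f x ∂μ = ∫⁻ x, E.indicator 1 x * f x ∂μ := by
    rw [← lintegral_indicator hE]
    refine lintegral_congr fun x ↦ ?_
    by_cases hx : x ∈ E <;> simp [hx]
  have hsetF (x : V) (f : ℝ → ℝ≥0∞) : ∫⁻ t in {t : ℝ | x + t • ξ ∈ E}, f t =
      ∫⁻ t : ℝ, E.indicator 1 (x + t • ξ) * f t := by
    rw [← lintegral_indicator (hF x)]
    refine lintegral_congr fun t ↦ ?_
    by_cases ht : x + t • ξ ∈ E <;> simp [ht]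
  have hvolm : Measurable fun x ↦ volume {t : ℝ | x + t • ξ ∈ E} := by
    simp_rw [hvol]
    exact Measurable.lintegral_prod_right' (f := fun p : V × ℝ ↦ E.indicator 1 (p.1 + p.2 • ξ))
      (by fun_prop)
  have hker : Measurable fun x ↦
      ∫⁻ t : ℝ, E.indicator 1 (x + t • ξ) * ENNReal.ofReal t ^ k :=
    Measurable.lintegral_prod_right'
      (f := fun p : V × ℝ ↦ E.indicator 1 (p.1 + p.2 • ξ) * ENNReal.ofReal p.2 ^ k) (by fun_prop)
  rw [hset, hset, ← setLIntegral_slab_lintegral_add_smul μ hξ (by fun_prop),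
    ← setLIntegral_slab_lintegral_add_smul μ hξ (by fun_prop),
    ← lintegral_const_mul' _ _ (by finiteness)]
  refine lintegral_mono fun x ↦ ?_
  calc
    _ = volume {t : ℝ | x + t • ξ ∈ E} ^ (k + 2) := by
      have h1 (s : ℝ) : volume {t : ℝ | x + s • ξ + t • ξ ∈ E} =
          volume {t : ℝ | x + t • ξ ∈ E} := by
        simp_rw [hvol, add_assoc, ← add_smul]
        exact lintegral_add_left_eq_self (fun t : ℝ ↦ E.indicator 1 (x + t • ξ)) s
      simp_rw [h1]
      rw [lintegral_mul_const _ (by fun_prop), ← hvol]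
      ring
    _ ≤ ((k : ℝ≥0∞) + 1) * (k + 2) * ∫⁻ s in {t : ℝ | x + t • ξ ∈ E},
        ∫⁻ t in {t : ℝ | x + t • ξ ∈ E}, ENNReal.ofReal (t - s) ^ k :=
      pow_volume_le_lintegral hk _
    _ = _ := by
      rw [hsetF]
      congr 1
      refine lintegral_congr fun s ↦ ?_
      rw [hsetF, ← lintegral_add_left_eq_self _ s]
      simp_rw [add_smul, add_assoc, add_sub_cancel_left]

end Slicing

/-- the convexity index is at most 1, i.e. `Jn E ≤ n(n+1)·λ(E)²`. -/
theorem statement12 (n : ℕ) (hn : 2 ≤ n) (E : Set (EuclideanSpace ℝ (Fin n)))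
    (hE : MeasurableSet E) (hfin : volume E < ⊤) :
    Jn n E ≤ (n : ℝ≥0∞) * ((n : ℝ≥0∞) + 1) * (volume E) ^ 2 := by
  obtain ⟨k, rfl⟩ : ∃ k, n = k + 1 := ⟨n - 1, by lia⟩
  have hk : k ≠ 0 := by lia
  have hind : Measurable (E.indicator (1 : EuclideanSpace ℝ (Fin (k + 1)) → ℝ≥0∞)) :=
    measurable_one.indicator hE
  have hmeas : Measurable fun p : (Metric.sphere (0 : EuclideanSpace ℝ (Fin (k + 1))) 1 ×
      EuclideanSpace ℝ (Fin (k + 1))) × ℝ ↦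
      E.indicator (1 : EuclideanSpace ℝ (Fin (k + 1)) → ℝ≥0∞)
        (p.1.2 + p.2 • (p.1.1 : EuclideanSpace ℝ (Fin (k + 1)))) * ENNReal.ofReal p.2 ^ k := by
    fun_prop
  calc
    Jn (k + 1) E ≤ ∫⁻ ξ : Metric.sphere (0 : EuclideanSpace ℝ (Fin (k + 1))) 1,
        ((k : ℝ≥0∞) + 1) * (k + 2) * (∫⁻ x in E, ∫⁻ t : ℝ, E.indicator 1
          (x + t • (ξ : EuclideanSpace ℝ (Fin (k + 1)))) * ENNReal.ofReal t ^ k)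
        ∂(volume : Measure (EuclideanSpace ℝ (Fin (k + 1)))).toSphere :=
      lintegral_mono fun ξ ↦ setLIntegral_volume_chord_pow_le volume hk hE (by simp)
    _ = ((k : ℝ≥0∞) + 1) * (k + 2) * ∫⁻ x in E,
        (∫⁻ ξ : Metric.sphere (0 : EuclideanSpace ℝ (Fin (k + 1))) 1, (∫⁻ t : ℝ, E.indicator 1
          (x + t • (ξ : EuclideanSpace ℝ (Fin (k + 1)))) * ENNReal.ofReal t ^ k)
        ∂(volume : Measure (EuclideanSpace ℝ (Fin (k + 1)))).toSphere) := by
      rw [lintegral_const_mul' _ _ (by finiteness), lintegral_lintegral_swap]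
      exact hmeas.lintegral_prod_right'.aemeasurable
    _ = ((k : ℝ≥0∞) + 1) * (k + 2) * ∫⁻ _ in E, volume E := by
      congr 1
      refine lintegral_congr fun x ↦ ?_
      have h := lintegral_toSphere_lintegral_smul
        (volume : Measure (EuclideanSpace ℝ (Fin (k + 1)))) (by simpa using hn)
        (f := fun y ↦ E.indicator 1 (x + y)) (by fun_prop)
      rw [lintegral_add_left_eq_self (E.indicator 1) x, lintegral_indicator_one hE] at h
      simpa using h
    _ = _ := by
      rw [setLIntegral_const]
      push_cast
      ring
end
end

section
/- Let n ≥ 2 be an integer and let c ∈ (0,1). There exists c′ ∈ (0,1), depending only on n and c, with the following property: for every Lebesgue-measurable set E ⊆ ℝⁿ with 0 < λ(E) < ∞ satisfying J_n(E) ≥ c·n(n+1)·λ(E)², there exists a convex set F ⊆ ℝⁿ with c′·λ(E) ≤ λ(F) ≤ c′^{−1}·λ(E) and λ(E ∩ F) ≥ c′·λ(E). -/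
open MeasureTheory
open scoped ENNReal

noncomputable section

section KernelOp

variable {α : Type*} [MeasurableSpace α]

/-- The integral operator with kernel `a` with respect to the measure `μ`. -/
def kernelOp (μ : Measure α) (a : α → α → ℝ≥0∞) (g : α → ℝ≥0∞) (x : α) : ℝ≥0∞ :=
  ∫⁻ y, a x y * g y ∂μ

variable {μ : Measure α} {a : α → α → ℝ≥0∞}

theorem kernelOp_mono {f g : α → ℝ≥0∞} (h : f ≤ g) : kernelOp μ a f ≤ kernelOp μ a g :=
  fun _ => lintegral_mono fun y => by gcongr; exact h y

variable [IsProbabilityMeasure μ]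

theorem measurable_kernelOp (ha : Measurable (Function.uncurry a)) {g : α → ℝ≥0∞}
    (hg : Measurable g) : Measurable (kernelOp μ a g) := by
  have : Measurable (Function.uncurry fun x y => a x y * g y) :=
    ha.mul (hg.comp measurable_snd)
  exact this.lintegral_prod_right

theorem measurable_iterate_kernelOp (ha : Measurable (Function.uncurry a)) {g : α → ℝ≥0∞}
    (hg : Measurable g) (k : ℕ) : Measurable ((kernelOp μ a)^[k] g) := by
  induction k with
  | zero => exact hg
  | succ k ih =>
    rw [Function.iterate_succ_apply']
    exact measurable_kernelOp ha ih

theorem lintegral_kernelOp_mul (ha : Measurable (Function.uncurry a))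
    (hsymm : ∀ x y, a x y = a y x) {f g : α → ℝ≥0∞} (hf : Measurable f) (hg : Measurable g) :
    ∫⁻ x, kernelOp μ a f x * g x ∂μ = ∫⁻ x, f x * kernelOp μ a g x ∂μ := by
  have hax : ∀ x, Measurable (a x) := fun x => ha.comp measurable_prodMk_left
  calc ∫⁻ x, kernelOp μ a f x * g x ∂μ = ∫⁻ x, ∫⁻ y, a x y * f y * g x ∂μ ∂μ := by
        refine lintegral_congr fun x => ?_
        exact (lintegral_mul_const (g x) (f := fun y => a x y * f y) ((hax x).mul hf)).symm
    _ = ∫⁻ y, ∫⁻ x, a x y * f y * g x ∂μ ∂μ := by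
        refine lintegral_lintegral_swap (Measurable.aemeasurable ?_)
        exact (ha.mul (hf.comp measurable_snd)).mul (hg.comp measurable_fst)
    _ = ∫⁻ y, f y * kernelOp μ a g y ∂μ := by
        refine lintegral_congr fun y => ?_
        refine Eq.trans ?_ (lintegral_const_mul (f y) (f := fun x => a y x * g x) ((hax y).mul hg))
        refine lintegral_congr fun x => ?_
        rw [hsymm x y]; ring

theorem lintegral_iterate_kernelOp_add (ha : Measurable (Function.uncurry a))
    (hsymm : ∀ x y, a x y = a y x) (k j : ℕ) :
    ∫⁻ x, (kernelOp μ a)^[k] 1 x * (kernelOp μ a)^[j] 1 x ∂μ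
      = ∫⁻ x, (kernelOp μ a)^[k + j] 1 x ∂μ := by
  induction k generalizing j with
  | zero => simp
  | succ k ih =>
    rw [Function.iterate_succ_apply', lintegral_kernelOp_mul ha hsymm
      (measurable_iterate_kernelOp ha measurable_one k)
      (measurable_iterate_kernelOp ha measurable_one j), ← Function.iterate_succ_apply' (kernelOp μ a), ih,
      Nat.succ_add_eq_add_succ]

theorem sq_lintegral_le_lintegral_sq {f : α → ℝ≥0∞} (hf : Measurable f) :
    (∫⁻ x, f x ∂μ) ^ 2 ≤ ∫⁻ x, f x ^ 2 ∂μ := by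
  have h := ENNReal.lintegral_mul_le_Lp_mul_Lq μ Real.HolderConjugate.two_two hf.aemeasurable
    (aemeasurable_const (b := (1 : ℝ≥0∞)))
  simp only [Pi.mul_apply, mul_one, ENNReal.one_rpow, lintegral_one, measure_univ] at h
  calc (∫⁻ x, f x ∂μ) ^ 2 ≤ ((∫⁻ x, f x ^ (2 : ℝ) ∂μ) ^ (1 / 2 : ℝ)) ^ 2 := by gcongr
    _ = ∫⁻ x, f x ^ 2 ∂μ := by
      rw [← ENNReal.rpow_natCast, ← ENNReal.rpow_mul]
      norm_num

theorem iterate_kernelOp_one_le_one (hle : ∀ x y, a x y ≤ 1) (k : ℕ) :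
    (kernelOp μ a)^[k] 1 ≤ 1 := by
  induction k with
  | zero => exact le_rfl
  | succ k ih =>
    rw [Function.iterate_succ_apply']
    refine (kernelOp_mono ih).trans fun x => ?_
    calc kernelOp μ a 1 x ≤ ∫⁻ _, 1 ∂μ := lintegral_mono fun y => by simpa using hle x y
      _ = 1 := by simp

theorem lintegral_iterate_kernelOp_antitone (hle : ∀ x y, a x y ≤ 1) {k j : ℕ} (hkj : k ≤ j) :
    ∫⁻ x, (kernelOp μ a)^[j] 1 x ∂μ ≤ ∫⁻ x, (kernelOp μ a)^[k] 1 x ∂μ := by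
  obtain ⟨i, rfl⟩ := Nat.exists_eq_add_of_le hkj
  refine lintegral_mono fun x => ?_
  rw [Function.iterate_add_apply]
  have hmono : Monotone (kernelOp μ a) := fun _ _ h => kernelOp_mono h
  exact hmono.iterate k (iterate_kernelOp_one_le_one hle i) x

/-- A lower bound for the density of walks of length `k` in a symmetric kernel. -/
theorem pow_le_lintegral_iterate_kernelOp (ha : Measurable (Function.uncurry a))
    (hsymm : ∀ x y, a x y = a y x) (hle : ∀ x y, a x y ≤ 1) (k : ℕ) :
    (∫⁻ x, ∫⁻ y, a x y ∂μ ∂μ) ^ 2 ^ k ≤ ∫⁻ x, (kernelOp μ a)^[k] 1 x ∂μ := by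
  have key : ∀ j : ℕ, (∫⁻ x, ∫⁻ y, a x y ∂μ ∂μ) ^ 2 ^ j
      ≤ ∫⁻ x, (kernelOp μ a)^[2 ^ j] 1 x ∂μ := by
    intro j
    induction j with
    | zero => simp [kernelOp]
    | succ j ih =>
      calc (∫⁻ x, ∫⁻ y, a x y ∂μ ∂μ) ^ 2 ^ (j + 1)
          = ((∫⁻ x, ∫⁻ y, a x y ∂μ ∂μ) ^ 2 ^ j) ^ 2 := by rw [← pow_mul, pow_succ]
        _ ≤ (∫⁻ x, (kernelOp μ a)^[2 ^ j] 1 x ∂μ) ^ 2 := by gcongr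
        _ ≤ ∫⁻ x, (kernelOp μ a)^[2 ^ j] 1 x ^ 2 ∂μ :=
          sq_lintegral_le_lintegral_sq (measurable_iterate_kernelOp ha measurable_one _)
        _ = ∫⁻ x, (kernelOp μ a)^[2 ^ (j + 1)] 1 x ∂μ := by
          simp_rw [sq]
          rw [lintegral_iterate_kernelOp_add ha hsymm, pow_succ, mul_two]
  exact (key k).trans (lintegral_iterate_kernelOp_antitone hle Nat.lt_two_pow_self.le)

end KernelOp

section Inversion

theorem half_le_volume_away_from_zero_one {A : Set ℝ} {δ : ℝ} (hδ : 0 < δ)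
    (hA : ENNReal.ofReal δ ≤ volume A) :
    ENNReal.ofReal (δ / 2) ≤ volume (A ∩ {u | δ / 8 ≤ |u| ∧ δ / 8 ≤ |u - 1|}) := by
  set G := A ∩ {u : ℝ | δ / 8 ≤ |u| ∧ δ / 8 ≤ |u - 1|}
  have hsub : A ⊆ G ∪ (Metric.ball 0 (δ / 8) ∪ Metric.ball 1 (δ / 8)) := by
    intro u hu
    by_cases h0 : δ / 8 ≤ |u|
    · by_cases h1 : δ / 8 ≤ |u - 1|
      · exact Or.inl ⟨hu, h0, h1⟩
      · exact Or.inr (Or.inr (by simpa [Real.dist_eq] using h1))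
    · exact Or.inr (Or.inl (by simpa [Real.dist_eq] using h0))
  have h1 : ENNReal.ofReal (δ / 2) + ENNReal.ofReal (δ / 2)
      ≤ volume G + ENNReal.ofReal (δ / 2) := by
    rw [← ENNReal.ofReal_add (by positivity) (by positivity), add_halves]
    refine (hA.trans (measure_mono hsub)).trans ((measure_union_le _ _).trans ?_)
    gcongr
    refine (measure_union_le _ _).trans ?_
    rw [Real.volume_ball, Real.volume_ball, ← ENNReal.ofReal_add (by positivity) (by positivity)]
    exact ENNReal.ofReal_le_ofReal (by linarith)
  exact (ENNReal.add_le_add_iff_right ENNReal.ofReal_ne_top).1 h1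

theorem pow_le_inversion_weight {δ u : ℝ} (hδ : 0 < δ) (hδ1 : δ ≤ 1) (h0 : δ / 8 ≤ |u|)
    (h1 : δ / 8 ≤ |u - 1|) {d k : ℕ} (hd : 2 ≤ d) (hk : k ≤ d) :
    (δ / 16) ^ (2 * d) ≤ |(-(u ^ 2)⁻¹)| * (|1 - u⁻¹| ^ k * (|u⁻¹| ^ d)⁻¹) := by
  have hu : 0 < |u| := by linarith
  have hu0 : u ≠ 0 := abs_pos.1 hu
  have hw : |1 - u⁻¹| = |u - 1| / |u| := by
    rw [← abs_div]; congr 1; field_simp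
  have hq : δ / 16 ≤ |1 - u⁻¹| := by
    rw [hw, le_div_iff₀ hu]
    rcases le_total |u| 2 with h2 | h2
    · nlinarith
    · have : |u| - 1 ≤ |u - 1| := by simpa using abs_sub_abs_le_abs_sub u 1
      nlinarith
  have he : |(-(u ^ 2)⁻¹)| * (|u⁻¹| ^ d)⁻¹ = |u| ^ (d - 2) := by
    obtain ⟨e, rfl⟩ := Nat.exists_eq_add_of_le hd
    rw [abs_neg, abs_inv, abs_pow, abs_inv, inv_pow, inv_inv, Nat.add_sub_cancel_left, pow_add]
    field_simp
  have h16 : δ / 16 ≤ 1 := by linarith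
  calc (δ / 16) ^ (2 * d) ≤ (δ / 16) ^ (k + (d - 2)) :=
        pow_le_pow_of_le_one (by positivity) h16 (by omega)
    _ = (δ / 16) ^ k * (δ / 16) ^ (d - 2) := pow_add _ _ _
    _ ≤ |1 - u⁻¹| ^ k * |u| ^ (d - 2) := by
        gcongr
        linarith
    _ = _ := by rw [← he]; ring

theorem le_lintegral_inversion {A : Set ℝ} (hAm : MeasurableSet A) {δ : ℝ} (hδ : 0 < δ)
    (hδ1 : δ ≤ 1) (hA : ENNReal.ofReal δ ≤ volume A) {d k : ℕ} (hd : 2 ≤ d) (hk : k ≤ d) :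
    ENNReal.ofReal ((δ / 16) ^ (2 * d) * (δ / 2))
      ≤ ∫⁻ t in Set.Icc (-(8 / δ)) (8 / δ),
          ENNReal.ofReal (|1 - t| ^ k * (|t| ^ d)⁻¹) * A.indicator 1 t⁻¹ := by
  set s : Set ℝ := {u | δ / 8 ≤ |u| ∧ δ / 8 ≤ |u - 1|}
  have hs : MeasurableSet s :=
    (measurableSet_le measurable_const (measurable_norm (α := ℝ))).inter
      (measurableSet_le measurable_const (measurable_norm.comp (measurable_id.sub_const (1 : ℝ))))
  have hs0 : ∀ u ∈ A ∩ s, u ≠ 0 := by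
    rintro u ⟨-, hu, -⟩ rfl
    rw [abs_zero] at hu
    linarith
  have himg : Inv.inv '' (A ∩ s) ⊆ Set.Icc (-(8 / δ)) (8 / δ) := by
    rintro _ ⟨u, ⟨-, hu, -⟩, rfl⟩
    rw [Set.mem_Icc, ← abs_le, abs_inv, inv_le_comm₀ (by linarith) (by positivity), inv_div]
    exact hu
  have hderiv : ∀ u ∈ A ∩ s, HasDerivWithinAt Inv.inv (-(u ^ 2)⁻¹) (A ∩ s) u :=
    fun u hu => (hasDerivAt_inv (hs0 u hu)).hasDerivWithinAt
  calc ENNReal.ofReal ((δ / 16) ^ (2 * d) * (δ / 2))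
      = ENNReal.ofReal ((δ / 16) ^ (2 * d)) * ENNReal.ofReal (δ / 2) :=
        ENNReal.ofReal_mul (by positivity)
    _ ≤ ENNReal.ofReal ((δ / 16) ^ (2 * d)) * volume (A ∩ s) := by
        gcongr
        exact half_le_volume_away_from_zero_one hδ hA
    _ = ∫⁻ _ in A ∩ s, ENNReal.ofReal ((δ / 16) ^ (2 * d)) := by
        rw [setLIntegral_const]
    _ ≤ ∫⁻ u in A ∩ s, ENNReal.ofReal |(-(u ^ 2)⁻¹)| *
          (ENNReal.ofReal (|1 - u⁻¹| ^ k * (|u⁻¹| ^ d)⁻¹) * A.indicator 1 u⁻¹⁻¹) := by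
        refine setLIntegral_mono' (hAm.inter hs) fun u hu => ?_
        rw [inv_inv, Set.indicator_of_mem hu.1, Pi.one_apply, mul_one,
          ← ENNReal.ofReal_mul (abs_nonneg _)]
        exact ENNReal.ofReal_le_ofReal (pow_le_inversion_weight hδ hδ1 hu.2.1 hu.2.2 hd hk)
    _ = ∫⁻ t in Inv.inv '' (A ∩ s),
          ENNReal.ofReal (|1 - t| ^ k * (|t| ^ d)⁻¹) * A.indicator 1 t⁻¹ :=
        (lintegral_image_eq_lintegral_abs_deriv_mul (hAm.inter hs) hderiv
          inv_injective.injOn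
          fun t => ENNReal.ofReal (|1 - t| ^ k * (|t| ^ d)⁻¹) * A.indicator 1 t⁻¹).symm
    _ ≤ _ := lintegral_mono_set himg

end Inversion

section Chord

variable {V : Type*} [NormedAddCommGroup V] [NormedSpace ℝ V]

/-- The length of the intersection of `E` with the line through `x` and `y`, relative to the
distance between `x` and `y`. -/
def chordRatio (E : Set V) (x y : V) : ℝ≥0∞ :=
  volume {u : ℝ | x + u • (y - x) ∈ E}

open scoped Classical in
/-- The indicator of the pairs of points whose relative chord length is at least `δ`. -/
def chordKernel (E : Set V) (δ : ℝ) (x y : V) : ℝ≥0∞ :=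
  if ENNReal.ofReal δ ≤ chordRatio E x y then 1 else 0

theorem chordKernel_le_one (E : Set V) (δ : ℝ) (x y : V) : chordKernel E δ x y ≤ 1 := by
  unfold chordKernel
  split_ifs <;> simp

variable [MeasurableSpace V] [BorelSpace V]

theorem chordRatio_symm {E : Set V} (hE : MeasurableSet E) (x y : V) :
    chordRatio E x y = chordRatio E y x := by
  have hm : MeasurableSet {u : ℝ | x + u • (y - x) ∈ E} := by
    have : Measurable fun u : ℝ => x + u • (y - x) := by fun_prop
    exact this hE
  rw [chordRatio, ← (Measure.measurePreserving_sub_left volume (1 : ℝ)).measure_preimage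
    hm.nullMeasurableSet, chordRatio]
  congr 1
  ext u
  simp only [Set.mem_preimage, Set.mem_ofPred_eq]
  rw [show x + (1 - u) • (y - x) = y + u • (x - y) by module]

theorem chordKernel_symm {E : Set V} (hE : MeasurableSet E) (δ : ℝ) (x y : V) :
    chordKernel E δ x y = chordKernel E δ y x := by
  rw [chordKernel, chordKernel, chordRatio_symm hE]

variable [FiniteDimensional ℝ V]

theorem measurable_chordRatio {E : Set V} (hE : MeasurableSet E) :
    Measurable (Function.uncurry (chordRatio E)) := by
  have h : Measurable fun q : (V × V) × ℝ => q.1.1 + q.2 • (q.1.2 - q.1.1) := by fun_prop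
  exact measurable_measure_prodMk_left (ν := (volume : Measure ℝ)) (h hE)

theorem measurable_chordKernel {E : Set V} (hE : MeasurableSet E) (δ : ℝ) :
    Measurable (Function.uncurry (chordKernel E δ)) := by
  classical
  exact Measurable.ite (measurableSet_le measurable_const (measurable_chordRatio hE))
    measurable_const measurable_const

theorem lintegral_comp_smul_addHaar (ν : Measure V) [ν.IsAddHaarMeasure] {F : V → ℝ≥0∞}
    (hF : Measurable F) {r : ℝ} (hr : r ≠ 0) :
    ∫⁻ x, F (r • x) ∂ν = ENNReal.ofReal (|r| ^ Module.finrank ℝ V)⁻¹ * ∫⁻ x, F x ∂ν := by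
  rw [← lintegral_map hF (measurable_const_smul r), Measure.map_addHaar_smul ν hr,
    lintegral_smul_measure, abs_inv, abs_pow, smul_eq_mul]

theorem lintegral_homothety_le (ν : Measure V) [ν.IsAddHaarMeasure] {f g : V → ℝ≥0∞}
    (hf : Measurable f) (hg : Measurable g) (hd : Module.finrank ℝ V ≠ 0) (z : V) (t : ℝ) :
    ENNReal.ofReal (|t| ^ Module.finrank ℝ V)⁻¹ * ∫⁻ y, f (z + t⁻¹ • (y - z)) * g y ∂ν
      ≤ ∫⁻ x, f x * g (z + t • (x - z)) ∂ν := by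
  rcases eq_or_ne t 0 with rfl | ht
  · simp [hd]
  apply le_of_eq
  have h1 : ∫⁻ y, f (z + t⁻¹ • (y - z)) * g y ∂ν = ∫⁻ w, f (z + t⁻¹ • w) * g (z + w) ∂ν := by
    rw [← lintegral_sub_right_eq_self (fun w => f (z + t⁻¹ • w) * g (z + w)) z]
    simp
  have h2 : ∫⁻ x, f x * g (z + t • (x - z)) ∂ν = ∫⁻ w, f (z + w) * g (z + t • w) ∂ν := by
    rw [← lintegral_sub_right_eq_self (fun w => f (z + w) * g (z + t • w)) z]
    simp
  rw [h1, h2, ← lintegral_comp_smul_addHaar ν (by fun_prop) ht]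
  simp [inv_smul_smul₀ ht]

theorem kernelOp_chordKernel_le (ν : Measure V) [ν.IsAddHaarMeasure] {E : Set V}
    (hE : MeasurableSet E) {δ : ℝ} (hδ : 0 < δ) (hδ1 : δ ≤ 1) {k : ℕ}
    (hd : 2 ≤ Module.finrank ℝ V) (hk : k ≤ Module.finrank ℝ V)
    {g : V → ℝ≥0∞} (hg : Measurable g) (z : V) :
    ENNReal.ofReal ((δ / 16) ^ (2 * Module.finrank ℝ V) * (δ / 2)) *
        kernelOp (ν.restrict E) (chordKernel E δ) g z
      ≤ ∫⁻ x in E, (∫⁻ t in Set.Icc (-(8 / δ)) (8 / δ),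
          ENNReal.ofReal (|1 - t| ^ k) * E.indicator g (z + t • (x - z))) ∂ν := by
  set d := Module.finrank ℝ V
  set κ := ENNReal.ofReal ((δ / 16) ^ (2 * d) * (δ / 2))
  set I := Set.Icc (-(8 / δ)) (8 / δ)
  have hgE : Measurable (E.indicator g) := hg.indicator hE
  have h1E : Measurable (E.indicator (1 : V → ℝ≥0∞)) := measurable_one.indicator hE
  have hk1 : Measurable (chordKernel E δ z) :=
    (measurable_chordKernel hE δ).comp measurable_prodMk_left
  calc κ * kernelOp (ν.restrict E) (chordKernel E δ) g z
      = ∫⁻ y, κ * chordKernel E δ z y * E.indicator g y ∂ν := by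
        rw [kernelOp, ← lintegral_const_mul κ (f := fun y => chordKernel E δ z y * g y)
          (hk1.mul hg), ← lintegral_indicator hE]
        refine lintegral_congr fun y => ?_
        by_cases hy : y ∈ E <;> simp [hy, mul_assoc]
    _ ≤ ∫⁻ y, (∫⁻ t in I, ENNReal.ofReal (|1 - t| ^ k * (|t| ^ d)⁻¹) *
          E.indicator 1 (z + t⁻¹ • (y - z))) * E.indicator g y ∂ν := by
        refine lintegral_mono fun y => ?_
        gcongr
        unfold chordKernel
        split_ifs with h
        · rw [mul_one]
          have hm : MeasurableSet {u : ℝ | z + u • (y - z) ∈ E} := by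
            have : Measurable fun u : ℝ => z + u • (y - z) := by fun_prop
            exact this hE
          exact le_lintegral_inversion hm hδ hδ1 h hd hk
        · simp
    _ = ∫⁻ t in I, (∫⁻ y, ENNReal.ofReal (|1 - t| ^ k * (|t| ^ d)⁻¹) *
          (E.indicator 1 (z + t⁻¹ • (y - z)) * E.indicator g y) ∂ν) := by
        rw [lintegral_lintegral_swap (Measurable.aemeasurable (by fun_prop))]
        refine lintegral_congr fun y => ?_
        rw [← lintegral_mul_const _ (by fun_prop)]
        simp_rw [mul_assoc]
    _ ≤ ∫⁻ t in I, (∫⁻ x in E, ENNReal.ofReal (|1 - t| ^ k) *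
          E.indicator g (z + t • (x - z)) ∂ν) := by
        refine lintegral_mono fun t => ?_
        rw [lintegral_const_mul _ (by fun_prop), ENNReal.ofReal_mul (by positivity), mul_assoc,
          lintegral_const_mul _ (by fun_prop)]
        gcongr
        refine (lintegral_homothety_le ν h1E hgE (by omega) z t).trans (le_of_eq ?_)
        rw [← lintegral_indicator hE]
        refine lintegral_congr fun x => ?_
        by_cases hx : x ∈ E <;> simp [hx]
    _ = _ := lintegral_lintegral_swap (Measurable.aemeasurable (by fun_prop))

end Chord

section SimplexIntegral

theorem lintegral_pi_cons {α : Type*} [MeasurableSpace α] (m : Measure α) [SigmaFinite m] {k : ℕ}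
    {f : (Fin (k + 1) → α) → ℝ≥0∞} (hf : Measurable f) :
    ∫⁻ x, f x ∂(Measure.pi fun _ => m)
      = ∫⁻ a, (∫⁻ x, f (Fin.cons a x) ∂(Measure.pi fun _ : Fin k => m)) ∂m := by
  have h := (measurePreserving_piFinSuccAbove (fun _ : Fin (k + 1) => m) 0).symm
  rw [← h.lintegral_comp hf, lintegral_prod _ (by fun_prop)]
  refine lintegral_congr fun a => lintegral_congr fun x => congrArg f ?_
  exact Fin.insertNth_zero' a x

/-- Lebesgue measure on the cube `[-R, R]ᵏ`. -/
def cubeMeasure (k : ℕ) (R : ℝ) : Measure (Fin k → ℝ) :=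
  Measure.pi fun _ => volume.restrict (Set.Icc (-R) R)

instance (k : ℕ) (R : ℝ) : SigmaFinite (cubeMeasure k R) := by
  unfold cubeMeasure; infer_instance

theorem cubeMeasure_eq_restrict (k : ℕ) (R : ℝ) :
    cubeMeasure k R = volume.restrict (Set.univ.pi fun _ => Set.Icc (-R) R) :=
  (Measure.restrict_pi_pi (fun _ => volume) fun _ => Set.Icc (-R) R).symm

theorem lintegral_cubeMeasure_smul_le {k : ℕ} {R R' c : ℝ} (hR : |c| * R ≤ R')
    {F : (Fin k → ℝ) → ℝ≥0∞} (hF : Measurable F) :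
    ENNReal.ofReal (|c| ^ k) * ∫⁻ b, F (c • b) ∂(cubeMeasure k R)
      ≤ ∫⁻ b, F b ∂(cubeMeasure k R') := by
  have hbox : ∀ r : ℝ, MeasurableSet (Set.univ.pi fun _ : Fin k => Set.Icc (-r) r) :=
    fun r => MeasurableSet.univ_pi fun _ => measurableSet_Icc
  rcases k.eq_zero_or_pos with rfl | hk
  · have hs : ∀ b : Fin 0 → ℝ, c • b = b := fun b => Subsingleton.elim _ _
    have hc : cubeMeasure 0 R = cubeMeasure 0 R' := by
      rw [cubeMeasure, cubeMeasure, Measure.pi_of_empty, Measure.pi_of_empty]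
    simp [hs, hc]
  rcases eq_or_ne c 0 with rfl | hc
  · simp [hk.ne']
  rw [cubeMeasure_eq_restrict, cubeMeasure_eq_restrict, ← lintegral_indicator (hbox R),
    ← lintegral_indicator (hbox R')]
  have hle : ∀ b : Fin k → ℝ,
      (Set.univ.pi fun _ => Set.Icc (-R) R).indicator (fun b => F (c • b)) b
        ≤ (Set.univ.pi fun _ => Set.Icc (-R') R').indicator F (c • b) := by
    intro b
    by_cases hb : b ∈ Set.univ.pi fun _ : Fin k => Set.Icc (-R) R
    · have hcb : c • b ∈ Set.univ.pi fun _ : Fin k => Set.Icc (-R') R' := by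
        intro i _
        have := hb i trivial
        rw [Set.mem_Icc, ← abs_le] at this ⊢
        rw [Pi.smul_apply, smul_eq_mul, abs_mul]
        exact (mul_le_mul_of_nonneg_left this (abs_nonneg c)).trans hR
      rw [Set.indicator_of_mem hb, Set.indicator_of_mem hcb]
    · rw [Set.indicator_of_notMem hb]
      exact zero_le
  calc _ ≤ ENNReal.ofReal (|c| ^ k) *
        ∫⁻ b, (Set.univ.pi fun _ => Set.Icc (-R') R').indicator F (c • b) := by
        gcongr with b
        exact hle b
    _ = _ := by
        rw [lintegral_comp_smul_addHaar volume (hF.indicator (hbox R')) hc, ← mul_assoc,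
          ← ENNReal.ofReal_mul (by positivity), Module.finrank_fin_fun,
          mul_inv_cancel₀ (by positivity), ENNReal.ofReal_one, one_mul]

variable {V : Type*} [NormedAddCommGroup V] [NormedSpace ℝ V] [MeasurableSpace V]

/-- The integral of `g` over the `R`-dilates of all the simplices with `k + 1` vertices, in
barycentric coordinates, the vertices being independently distributed according to `μ`. -/
def simplexIntegral (μ : Measure V) (k : ℕ) (R : ℝ) (g : V → ℝ≥0∞) : ℝ≥0∞ :=
  ∫⁻ x₀, (∫⁻ x, (∫⁻ b, g (x₀ + ∑ i, b i • (x i - x₀)) ∂(cubeMeasure k R))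
    ∂(Measure.pi fun _ : Fin k => μ)) ∂μ

variable [BorelSpace V] [FiniteDimensional ℝ V]

theorem simplexIntegral_succ (μ : Measure V) [SigmaFinite μ] (k : ℕ) (R : ℝ) {g : V → ℝ≥0∞}
    (hg : Measurable g) :
    simplexIntegral μ (k + 1) R g = ∫⁻ x₀, (∫⁻ x, (∫⁻ y, (∫⁻ t in Set.Icc (-R) R,
      (∫⁻ b, g (x₀ + (t • (y - x₀) + ∑ i, b i • (x i - x₀))) ∂(cubeMeasure k R))) ∂μ)
      ∂(Measure.pi fun _ : Fin k => μ)) ∂μ := by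
  refine lintegral_congr fun x₀ => ?_
  rw [lintegral_pi_cons μ (by fun_prop), lintegral_lintegral_swap
    (Measurable.aemeasurable (by fun_prop))]
  refine lintegral_congr fun x => lintegral_congr fun y => ?_
  rw [cubeMeasure, lintegral_pi_cons _ (by fun_prop)]
  simp only [Fin.sum_univ_succ, Fin.cons_zero, Fin.cons_succ]
  rfl

theorem simplexIntegral_kernelOp_le (ν : Measure V) [ν.IsAddHaarMeasure] {E : Set V}
    (hE : MeasurableSet E) {δ : ℝ} (hδ : 0 < δ) (hδ1 : δ ≤ 1) {k : ℕ}
    (hd : 2 ≤ Module.finrank ℝ V) (hk : k ≤ Module.finrank ℝ V)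
    {g : V → ℝ≥0∞} (hg : Measurable g) {R R' : ℝ} (hR : 0 ≤ R) (hR1 : 8 / δ ≤ R')
    (hR2 : (1 + 8 / δ) * R ≤ R') :
    ENNReal.ofReal ((δ / 16) ^ (2 * Module.finrank ℝ V) * (δ / 2)) *
        simplexIntegral (ν.restrict E) k R (kernelOp (ν.restrict E) (chordKernel E δ) g)
      ≤ simplexIntegral (ν.restrict E) (k + 1) R' (E.indicator g) := by
  set κ := ENNReal.ofReal ((δ / 16) ^ (2 * Module.finrank ℝ V) * (δ / 2))
  set μ := ν.restrict E
  have hG : Measurable (E.indicator g) := hg.indicator hE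
  set G := E.indicator g
  rw [simplexIntegral_succ _ _ _ hG, simplexIntegral,
    ← lintegral_const_mul' _ _ ENNReal.ofReal_ne_top]
  refine lintegral_mono fun x₀ => ?_
  rw [← lintegral_const_mul' _ _ ENNReal.ofReal_ne_top]
  refine lintegral_mono fun x => ?_
  rw [← lintegral_const_mul' _ _ ENNReal.ofReal_ne_top]
  calc ∫⁻ b, κ * kernelOp μ (chordKernel E δ) g (x₀ + ∑ i, b i • (x i - x₀)) ∂(cubeMeasure k R)
      ≤ ∫⁻ b, (∫⁻ y, (∫⁻ t in Set.Icc (-(8 / δ)) (8 / δ), ENNReal.ofReal (|1 - t| ^ k) *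
          G ((x₀ + ∑ i, b i • (x i - x₀)) + t • (y - (x₀ + ∑ i, b i • (x i - x₀))))) ∂μ)
          ∂(cubeMeasure k R) :=
        lintegral_mono fun b => kernelOp_chordKernel_le ν hE hδ hδ1 hd hk hg _
    _ = ∫⁻ y, (∫⁻ b, (∫⁻ t in Set.Icc (-(8 / δ)) (8 / δ), ENNReal.ofReal (|1 - t| ^ k) *
          G ((x₀ + ∑ i, b i • (x i - x₀)) + t • (y - (x₀ + ∑ i, b i • (x i - x₀)))))
          ∂(cubeMeasure k R)) ∂μ :=
        lintegral_lintegral_swap (Measurable.aemeasurable (by fun_prop))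
    _ = ∫⁻ y, (∫⁻ t in Set.Icc (-(8 / δ)) (8 / δ), (∫⁻ b, ENNReal.ofReal (|1 - t| ^ k) *
          G ((x₀ + ∑ i, b i • (x i - x₀)) + t • (y - (x₀ + ∑ i, b i • (x i - x₀))))
          ∂(cubeMeasure k R))) ∂μ :=
        lintegral_congr fun y => lintegral_lintegral_swap (Measurable.aemeasurable (by fun_prop))
    _ ≤ ∫⁻ y, (∫⁻ t in Set.Icc (-(8 / δ)) (8 / δ),
          (∫⁻ b, G (x₀ + (t • (y - x₀) + ∑ i, b i • (x i - x₀))) ∂(cubeMeasure k R'))) ∂μ := by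
        refine lintegral_mono fun y => setLIntegral_mono' measurableSet_Icc fun t ht => ?_
        have hF : Measurable fun b : Fin k → ℝ =>
          G (x₀ + (t • (y - x₀) + ∑ i, b i • (x i - x₀))) := by fun_prop
        have ht' : |1 - t| * R ≤ R' := by
          refine (mul_le_mul_of_nonneg_right ?_ hR).trans hR2
          rw [Set.mem_Icc] at ht
          rw [abs_le]
          constructor <;> linarith
        refine le_trans (le_of_eq ?_) (lintegral_cubeMeasure_smul_le ht' hF)
        rw [lintegral_const_mul' _ _ ENNReal.ofReal_ne_top]
        congr 1
        refine lintegral_congr fun b => ?_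
        congr 1
        simp only [Pi.smul_apply, smul_eq_mul, mul_smul, ← Finset.smul_sum]
        module
    _ ≤ _ := by
        refine lintegral_mono fun y => lintegral_mono_set ?_
        exact Set.Icc_subset_Icc (by linarith) hR1

end SimplexIntegral

section WalkBound

variable {V : Type*} [NormedAddCommGroup V] [NormedSpace ℝ V] [MeasurableSpace V]

theorem simplexIntegral_mono (μ : Measure V) (k : ℕ) (R : ℝ) {f g : V → ℝ≥0∞} (h : f ≤ g) :
    simplexIntegral μ k R f ≤ simplexIntegral μ k R g :=
  lintegral_mono fun _ => lintegral_mono fun _ => lintegral_mono fun _ => h _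

variable [BorelSpace V] [FiniteDimensional ℝ V] (ν : Measure V) [ν.IsAddHaarMeasure] {E : Set V}

theorem pow_mul_lintegral_iterate_le_simplexIntegral [IsProbabilityMeasure (ν.restrict E)]
    (hE : MeasurableSet E) {δ : ℝ} (hδ : 0 < δ) (hδ1 : δ ≤ 1)
    (hd : 2 ≤ Module.finrank ℝ V) {k : ℕ} (hk : k ≤ Module.finrank ℝ V) (j : ℕ) :
    ENNReal.ofReal ((δ / 16) ^ (2 * Module.finrank ℝ V) * (δ / 2)) ^ k *
        ∫⁻ x in E, (kernelOp (ν.restrict E) (chordKernel E δ))^[k + j] 1 x ∂ν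
      ≤ simplexIntegral (ν.restrict E) k ((1 + 8 / δ) ^ k)
          (E.indicator ((kernelOp (ν.restrict E) (chordKernel E δ))^[j] 1)) := by
  have h1 : (1 : ℝ) ≤ 1 + 8 / δ := by
    have : 0 < 8 / δ := by positivity
    linarith
  induction k generalizing j with
  | zero =>
    simp only [pow_zero, zero_add, one_mul, simplexIntegral, Finset.univ_eq_empty,
      Finset.sum_empty, add_zero, lintegral_const]
    rw [cubeMeasure, Measure.pi_of_empty, Measure.pi_of_empty]
    simp only [measure_univ, mul_one]
    refine setLIntegral_mono' hE fun x hx => ?_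
    rw [Set.indicator_of_mem hx]
  | succ k ih =>
    have hm := measurable_iterate_kernelOp (μ := ν.restrict E) (measurable_chordKernel hE δ)
      measurable_one j
    refine le_trans ?_ (simplexIntegral_kernelOp_le ν hE hδ hδ1 hd (Nat.le_of_succ_le hk) hm
      (R := (1 + 8 / δ) ^ k) (by positivity) ?_ ?_)
    · rw [pow_succ', mul_assoc]
      gcongr
      rw [add_assoc, add_comm 1 j]
      refine (ih (Nat.le_of_succ_le hk) (j + 1)).trans (simplexIntegral_mono _ _ _ ?_)
      rw [Function.iterate_succ_apply']
      exact Set.indicator_le_self _ _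
    · have : 1 + 8 / δ ≤ (1 + 8 / δ) ^ (k + 1) := le_self_pow₀ h1 k.succ_ne_zero
      linarith
    · rw [pow_succ']

theorem pow_le_simplexIntegral [IsProbabilityMeasure (ν.restrict E)]
    (hE : MeasurableSet E) {δ : ℝ} (hδ : 0 < δ) (hδ1 : δ ≤ 1) {n : ℕ}
    (hn : Module.finrank ℝ V = n) (hn2 : 2 ≤ n) :
    ENNReal.ofReal ((δ / 16) ^ (2 * n) * (δ / 2)) ^ n *
        (∫⁻ x in E, (∫⁻ y in E, chordKernel E δ x y ∂ν) ∂ν) ^ 2 ^ n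
      ≤ simplexIntegral (ν.restrict E) n ((1 + 8 / δ) ^ n) (E.indicator 1) := by
  subst hn
  refine le_trans ?_ (pow_mul_lintegral_iterate_le_simplexIntegral ν hE hδ hδ1 hn2 le_rfl 0)
  gcongr
  exact pow_le_lintegral_iterate_kernelOp (measurable_chordKernel hE δ)
    (chordKernel_symm hE δ) (chordKernel_le_one E δ) _

end WalkBound

section SmallDeterminant

open Matrix

variable {n : ℕ}

/-- The side half-lengths of a box all of whose sides but the `i`-th have half-length `1`. -/
def boxRadius (i : Fin n) (r : ℝ) : Fin n → ℝ := Function.update 1 i r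

theorem boxRadius_self (i : Fin n) (r : ℝ) : boxRadius i r i = r := Function.update_self ..

theorem boxRadius_of_ne {i j : Fin n} (h : j ≠ i) (r : ℝ) : boxRadius i r j = 1 :=
  Function.update_of_ne h ..

theorem prod_boxRadius (i : Fin n) (r : ℝ) : ∏ j, boxRadius i r j = r := by
  rw [boxRadius, Finset.prod_update_of_mem (Finset.mem_univ i)]
  simp

theorem det_updateRow_updateRow_swap (A : Matrix (Fin n) (Fin n) ℝ) {i j : Fin n} (hij : i ≠ j)
    (e y : Fin n → ℝ) :
    |((A.updateRow i e).updateRow j y).det| = |((A.updateRow i y).updateRow j e).det| := by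
  have h : (A.updateRow i e).updateRow j y
      = ((A.updateRow i y).updateRow j e).submatrix (Equiv.swap i j) id := by
    ext a b
    simp only [submatrix_apply, updateRow_apply, id]
    by_cases ha : a = i
    · subst ha; simp [hij]
    · by_cases hb : a = j
      · subst hb; simp [hij]
      · simp [ha, hb, Equiv.swap_apply_of_ne_of_ne]
  rw [h, det_permute, abs_mul, Equiv.Perm.sign_swap hij]
  simp

theorem mem_image_box_of_abs_det_le (A : Matrix (Fin n) (Fin n) ℝ) (i : Fin n)
    (e y : Fin n → ℝ) {η : ℝ} (hD : (A.updateRow i e).det ≠ 0)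
    (hη : |(A.updateRow i y).det| ≤ η)
    (hmax : ∀ j, j ≠ i → |((A.updateRow i y).updateRow j e).det| ≤ |(A.updateRow i e).det|) :
    y ∈ Matrix.toLin' (A.updateRow i e)ᵀ '' Set.Icc
      (-boxRadius i (η / |(A.updateRow i e).det|))
      (boxRadius i (η / |(A.updateRow i e).det|)) := by
  set B := A.updateRow i e with hB
  have hpos : 0 < |B.det| := abs_pos.2 hD
  refine ⟨B.det⁻¹ • Bᵀ.cramer y, ?_, ?_⟩
  · suffices h : ∀ j, |(B.det⁻¹ • Bᵀ.cramer y) j|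
        ≤ boxRadius i (η / |B.det|) j from
      ⟨fun j => (abs_le.1 (h j)).1, fun j => (abs_le.1 (h j)).2⟩
    intro j
    rw [Pi.smul_apply, smul_eq_mul, cramer_transpose_apply, abs_mul, abs_inv, inv_mul_eq_div]
    by_cases hj : j = i
    · subst hj
      rw [boxRadius_self, hB, updateRow_idem]
      gcongr
    · rw [boxRadius_of_ne hj, div_le_one hpos, hB,
        det_updateRow_updateRow_swap A (Ne.symm hj)]
      exact hmax j hj
  · rw [map_smul, toLin'_apply, mulVec_cramer, det_transpose, inv_smul_smul₀ hD]

theorem volume_image_box (B : Matrix (Fin n) (Fin n) ℝ) (hB : B.det ≠ 0) (i : Fin n) {η : ℝ}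
    (hη : 0 ≤ η) :
    volume (Matrix.toLin' Bᵀ '' Set.Icc (-boxRadius i (η / |B.det|))
      (boxRadius i (η / |B.det|))) = ENNReal.ofReal (2 ^ n * η) := by
  have hpos : 0 < |B.det| := abs_pos.2 hB
  rw [Measure.addHaar_image_linearMap, LinearMap.det_toLin', det_transpose, Real.volume_Icc_pi,
    ← ENNReal.ofReal_prod_of_nonneg, ← ENNReal.ofReal_mul hpos.le]
  · congr 1
    have : ∀ j : Fin n, boxRadius i (η / |B.det|) j
        - (-boxRadius i (η / |B.det|)) j
        = 2 * boxRadius i (η / |B.det|) j := fun j => by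
      rw [Pi.neg_apply]; ring
    simp only [this]
    rw [Finset.prod_mul_distrib, prod_boxRadius]
    simp
    field_simp
  · intro j _
    have : 0 ≤ boxRadius i (η / |B.det|) j := by
      by_cases hj : j = i
      · subst hj; rw [boxRadius_self]; positivity
      · rw [boxRadius_of_ne hj]; simp
    rw [Pi.neg_apply]; linarith

theorem volume_setOf_det_add_smul_one_eq_zero (A : Matrix (Fin n) (Fin n) ℝ) :
    volume {t : ℝ | (A + t • (1 : Matrix (Fin n) (Fin n) ℝ)).det = 0} = 0 := by
  refine Set.Finite.measure_zero ?_ _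
  refine ((-A).charpoly.roots.toFinset.finite_toSet).subset fun t ht => ?_
  have hroot : (-A).charpoly.eval t = 0 := by
    rw [eval_charpoly, sub_neg_eq_add, add_comm, scalar_apply, ← smul_one_eq_diagonal]
    exact ht
  simpa [(charpoly_monic (-A)).ne_zero] using hroot

theorem pi_setOf_det_eq_zero (ν : Measure (Fin n → ℝ)) [ν.IsAddHaarMeasure] (x₀ : Fin n → ℝ) :
    (Measure.pi fun _ : Fin n => ν) {x | (of fun i => x i - x₀).det = 0} = 0 := by
  set ρ := Measure.pi fun _ : Fin n => ν
  set N : Set (Fin n → Fin n → ℝ) := {x | (of fun i => x i - x₀).det = 0}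
  have hdet : Continuous fun x : Fin n → Fin n → ℝ => (of fun i => x i - x₀).det :=
    Continuous.matrix_det (continuous_pi fun i => by fun_prop)
  have hN : MeasurableSet N := (isClosed_singleton.preimage hdet).measurableSet
  have hT : Measurable fun p : ℝ × (Fin n → Fin n → ℝ) =>
      p.2 + p.1 • (fun i j => (1 : Matrix (Fin n) (Fin n) ℝ) i j) := by fun_prop
  have hind : Measurable (N.indicator (1 : (Fin n → Fin n → ℝ) → ℝ≥0∞)) := measurable_one.indicator hN
  have h1 : ∀ t : ℝ, ∫⁻ x, N.indicator 1
      (x + t • (fun i j => (1 : Matrix (Fin n) (Fin n) ℝ) i j)) ∂ρ = ρ N := fun t => by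
    rw [lintegral_add_right_eq_self (fun x => N.indicator 1 x), lintegral_indicator_one hN]
  have h2 : ∀ x, ∫⁻ t in Set.Icc (0 : ℝ) 1, N.indicator 1
      (x + t • (fun i j => (1 : Matrix (Fin n) (Fin n) ℝ) i j)) = 0 := fun x => by
    have hset : MeasurableSet {t : ℝ |
        x + t • (fun i j => (1 : Matrix (Fin n) (Fin n) ℝ) i j) ∈ N} :=
      (hT.comp measurable_prodMk_right) hN
    have hz : volume {t : ℝ | x + t • (fun i j => (1 : Matrix (Fin n) (Fin n) ℝ) i j) ∈ N} = 0 := by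
      convert volume_setOf_det_add_smul_one_eq_zero (of fun i => x i - x₀) using 4 with t
      simp only [N, Set.mem_ofPred_eq]
      congr! 2
      ext i j
      simp
      ring
    refine le_antisymm ((setLIntegral_le_lintegral _ _).trans (le_of_eq ?_)) zero_le
    rw [← hz, ← lintegral_indicator_one hset]
    rfl
  calc ρ N = ∫⁻ _ in Set.Icc (0 : ℝ) 1, ρ N := by simp
    _ = ∫⁻ t in Set.Icc (0 : ℝ) 1, (∫⁻ x, N.indicator 1
      (x + t • (fun i j => (1 : Matrix (Fin n) (Fin n) ℝ) i j)) ∂ρ) := by simp_rw [h1]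
    _ = ∫⁻ x, (∫⁻ t in Set.Icc (0 : ℝ) 1, N.indicator 1
      (x + t • (fun i j => (1 : Matrix (Fin n) (Fin n) ℝ) i j))) ∂ρ :=
        lintegral_lintegral_swap (hind.comp hT).aemeasurable
    _ = 0 := by simp_rw [h2]; simp

theorem pi_le_of_forall_update_le {ι α : Type*} [Fintype ι] [DecidableEq ι] [MeasurableSpace α]
    (μ : Measure α) [IsProbabilityMeasure μ] {S : Set (ι → α)} (hS : MeasurableSet S) (i : ι)
    {C : ℝ≥0∞} (h : ∀ x, μ {y | Function.update x i y ∈ S} ≤ C) :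
    (Measure.pi fun _ => μ) S ≤ C := by
  rw [← lintegral_indicator_one hS]
  refine (lintegral_le_of_lmarginal_le (μ := fun _ : ι => μ) {i} (g := fun _ => C)
    (measurable_one.indicator hS) measurable_const fun x => ?_).trans (by simp)
  rw [lmarginal_singleton, lmarginal_singleton]
  have hm : MeasurableSet {y | Function.update x i y ∈ S} := measurable_update x hS
  calc ∫⁻ y, S.indicator 1 (Function.update x i y) ∂μ
      = ∫⁻ y, {y | Function.update x i y ∈ S}.indicator 1 y ∂μ := rfl
    _ = μ {y | Function.update x i y ∈ S} := lintegral_indicator_one hm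
    _ ≤ ∫⁻ _, C ∂μ := by simpa using h x

/-- Independent random vectors whose common distribution has density at most `c₀` rarely have a
small determinant. -/
theorem pi_setOf_abs_det_le (hn : 0 < n) (ν : Measure (Fin n → ℝ)) [ν.IsAddHaarMeasure]
    {c₀ : ℝ≥0∞} (hν : ν = c₀ • volume) (E : Set (Fin n → ℝ)) [IsProbabilityMeasure (ν.restrict E)]
    (x₀ : Fin n → ℝ) {η : ℝ} (hη : 0 ≤ η) :
    (Measure.pi fun _ : Fin n => ν.restrict E) {x | |(of fun i => x i - x₀).det| ≤ η}
      ≤ n * (c₀ * ENNReal.ofReal (2 ^ n * η)) := by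
  set ρ := Measure.pi fun _ : Fin n => ν.restrict E with hρ
  set e : Fin n → ℝ := Pi.single ⟨0, hn⟩ 1
  set A : (Fin n → Fin n → ℝ) → Matrix (Fin n) (Fin n) ℝ := fun x => of fun i => x i - x₀ with hA
  have hAc : Continuous A := continuous_pi fun i => by simp only [hA]; fun_prop
  have hdet : Continuous fun x => (A x).det := hAc.matrix_det
  have hdetu : ∀ i, Continuous fun x => ((A x).updateRow i e).det := fun i =>
    (hAc.matrix_updateRow i continuous_const).matrix_det
  set S : Fin n → Set (Fin n → Fin n → ℝ) := fun i =>
    {x | ((A x).updateRow i e).det ≠ 0} ∩ ({x | |(A x).det| ≤ η} ∩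
      ⋂ j, {x | |((A x).updateRow j e).det| ≤ |((A x).updateRow i e).det|}) with hS
  have hSm : ∀ i, MeasurableSet (S i) := fun i =>
    (isOpen_ne_fun (hdetu i) continuous_const).measurableSet.inter
      ((isClosed_le hdet.abs continuous_const).measurableSet.inter
        (MeasurableSet.iInter fun j => (isClosed_le (hdetu j).abs (hdetu i).abs).measurableSet))
  have hcover : {x | |(A x).det| ≤ η} ⊆ {x | (A x).det = 0} ∪ ⋃ i, S i := by
    intro x hx
    have : Nonempty (Fin n) := ⟨⟨0, hn⟩⟩
    obtain ⟨i, hi⟩ := Finite.exists_max fun i => |((A x).updateRow i e).det|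
    by_cases h0 : ((A x).updateRow i e).det = 0
    · left
      have hall : ∀ j, ((A x).updateRow j e).det = 0 := fun j => by
        have := hi j
        rw [h0, abs_zero] at this
        exact abs_nonpos_iff.1 this
      have := congrFun (congrFun (adjugate_mul (A x)) ⟨0, hn⟩) ⟨0, hn⟩
      rw [mul_apply] at this
      simp only [adjugate_apply] at this
      rw [Finset.sum_eq_zero fun j _ => by
        rw [show ((A x).updateRow j (Pi.single ⟨0, hn⟩ 1)).det = 0 from hall j, zero_mul]] at this
      simpa using this.symm
    · exact Or.inr (Set.mem_iUnion.2 ⟨i, h0, hx, Set.mem_iInter.2 hi⟩)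
  have hnull : ρ {x | (A x).det = 0} = 0 := by
    rw [hρ, ← Measure.restrict_pi_pi]
    exact le_antisymm ((Measure.restrict_apply_le _ _).trans (pi_setOf_det_eq_zero ν x₀).le) zero_le
  have hSi : ∀ i, ρ (S i) ≤ c₀ * ENNReal.ofReal (2 ^ n * η) := by
    intro i
    refine pi_le_of_forall_update_le (ν.restrict E) (hSm i) i fun x => ?_
    have hu : ∀ y, A (Function.update x i y) = (A x).updateRow i (y - x₀) := fun y => by
      ext a b
      by_cases ha : a = i
      · subst ha; simp [hA]
      · simp [hA, ha]
    by_cases hD : ((A x).updateRow i e).det = 0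
    · have : {y | Function.update x i y ∈ S i} = ∅ := by
        ext y
        simp only [hS, Set.mem_ofPred_eq, Set.mem_inter_iff, hu, updateRow_idem, hD, ne_eq,
          not_true_eq_false, false_and, Set.mem_empty_iff_false]
      rw [this, measure_empty]
      exact zero_le
    set Q := Matrix.toLin' ((A x).updateRow i e)ᵀ '' Set.Icc
      (-boxRadius i (η / |((A x).updateRow i e).det|))
      (boxRadius i (η / |((A x).updateRow i e).det|))
    have hsub : {y | Function.update x i y ∈ S i} ⊆ (fun y => y + -x₀) ⁻¹' Q := by
      rintro y ⟨h1, h2, h3⟩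
      simp only [Set.mem_ofPred_eq, Set.mem_iInter, hu, updateRow_idem] at h1 h2 h3
      rw [Set.mem_preimage, ← sub_eq_add_neg]
      exact mem_image_box_of_abs_det_le (A x) i e (y - x₀) h1 h2 fun j _ => h3 j
    calc ν.restrict E {y | Function.update x i y ∈ S i}
        ≤ ν ((fun y => y + -x₀) ⁻¹' Q) :=
          (Measure.restrict_apply_le _ _).trans (measure_mono hsub)
      _ = ν Q := measure_preimage_add_right ν _ _
      _ = c₀ * ENNReal.ofReal (2 ^ n * η) := by
          rw [hν, Measure.smul_apply, smul_eq_mul, volume_image_box _ hD i hη]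
  calc ρ {x | |(A x).det| ≤ η} ≤ ρ {x | (A x).det = 0} + ∑ i, ρ (S i) :=
        (measure_mono hcover).trans ((measure_union_le _ _).trans (by
          gcongr; exact measure_iUnion_fintype_le _ _))
    _ ≤ 0 + ∑ _i : Fin n, c₀ * ENNReal.ofReal (2 ^ n * η) := by
        rw [hnull]; gcongr with i; exact hSi i
    _ = _ := by simp

end SmallDeterminant

section Polar

theorem pow_volume_le_setLIntegral {A : Set ℝ} (hA : MeasurableSet A) (k : ℕ) {δ : ℝ}
    (hδ : 0 < δ) :
    volume A ^ (k + 1) ≤ 2 * 4 ^ k * (∫⁻ r in A ∩ {r | r ≠ 0 ∧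
        ENNReal.ofReal δ ≤ ENNReal.ofReal |r⁻¹| * volume A}, ENNReal.ofReal (|r| ^ k))
      + 2 * ENNReal.ofReal (δ ^ k) * ∫⁻ r in A, ENNReal.ofReal (|r| ^ k) := by
  set T := volume A with hT
  set B : Set ℝ := {r | r ≠ 0 ∧ ENNReal.ofReal δ ≤ ENNReal.ofReal |r⁻¹| * T} with hB
  have key : ∀ {s : ℝ} {A' C : Set ℝ}, 0 ≤ s → MeasurableSet A' → A' ⊆ C → (∀ r ∈ A', s ≤ |r|) →
      ENNReal.ofReal s ^ k * volume A' ≤ ∫⁻ r in C, ENNReal.ofReal (|r| ^ k) := by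
    intro s A' C hs hA' hC h
    calc ENNReal.ofReal s ^ k * volume A' = ∫⁻ _ in A', ENNReal.ofReal s ^ k := by simp
      _ ≤ ∫⁻ r in A', ENNReal.ofReal (|r| ^ k) := by
        refine setLIntegral_mono' hA' fun r hr => ?_
        rw [← ENNReal.ofReal_pow hs]
        gcongr
        exact h r hr
      _ ≤ _ := lintegral_mono_set hC
  rcases eq_or_ne T ⊤ with hTt | hTt
  · set A₁ := A ∩ {r : ℝ | 1 ≤ |r|}
    have hA₁ : MeasurableSet A₁ := hA.inter (measurableSet_le measurable_const (by fun_prop))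
    have hvol : volume A₁ = ⊤ := by
      by_contra hne
      have hsub : A ⊆ Set.Icc (-1) 1 ∪ A₁ := by
        intro r hr
        by_cases h : 1 ≤ |r|
        · exact Or.inr ⟨hr, h⟩
        · exact Or.inl (abs_le.1 (not_le.1 h).le)
      have := (measure_mono hsub).trans (measure_union_le (μ := volume) _ _)
      rw [← hT, hTt, Real.volume_Icc, top_le_iff] at this
      exact ENNReal.add_ne_top.2 ⟨ENNReal.ofReal_ne_top, hne⟩ this
    have h := key zero_le_one hA₁ (C := A ∩ B) ?_ (fun r hr => hr.2)
    · rw [hvol, ENNReal.ofReal_one, one_pow, one_mul, top_le_iff] at h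
      rw [h, ENNReal.mul_top (by positivity), top_add]
      exact le_top
    · rintro r ⟨hrA, hr⟩
      have hr0 : r ≠ 0 := by
        rintro rfl
        norm_num at hr
      refine ⟨hrA, hr0, ?_⟩
      rw [hTt, ENNReal.mul_top (by simpa using hr0)]
      exact le_top
  rcases eq_or_ne T 0 with hT0 | hT0
  · simp [hT0]
  set t := T.toReal with ht
  have htpos : 0 < t := ENNReal.toReal_pos hT0 hTt
  have htT : ENNReal.ofReal t = T := ENNReal.ofReal_toReal hTt
  set A₁ := A ∩ {r : ℝ | t / 4 ≤ |r| ∧ |r| ≤ t / δ} with hA₁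
  set A₂ := A ∩ {r : ℝ | t / δ ≤ |r|} with hA₂
  have hm₁ : MeasurableSet A₁ := hA.inter
    (MeasurableSet.inter (s₁ := {r : ℝ | t / 4 ≤ |r|}) (s₂ := {r : ℝ | |r| ≤ t / δ})
      (measurableSet_le measurable_const (by fun_prop))
      (measurableSet_le (by fun_prop) measurable_const))
  have hm₂ : MeasurableSet A₂ := hA.inter (measurableSet_le measurable_const (by fun_prop))
  have hhalf : T ≤ 2 * (volume A₁ + volume A₂) := by
    have hsub : A ⊆ Set.Icc (-(t / 4)) (t / 4) ∪ (A₁ ∪ A₂) := by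
      intro r hr
      rcases le_total (|r|) (t / 4) with h | h
      · exact Or.inl (abs_le.1 h)
      · rcases le_total (|r|) (t / δ) with h' | h'
        · exact Or.inr (Or.inl ⟨hr, h, h'⟩)
        · exact Or.inr (Or.inr ⟨hr, h'⟩)
    have h := (measure_mono hsub).trans ((measure_union_le (μ := volume) _ _).trans
      (add_le_add le_rfl (measure_union_le _ _)))
    rw [← hT, Real.volume_Icc, show t / 4 - -(t / 4) = t / 2 by ring] at h
    rcases eq_or_ne (volume A₁ + volume A₂) ⊤ with htop | htop
    · rw [htop]; simp
    rw [← htT, ← ENNReal.ofReal_toReal htop,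
      ← ENNReal.ofReal_add (by positivity) ENNReal.toReal_nonneg,
      ENNReal.ofReal_le_ofReal_iff (by positivity)] at h
    rw [← htT, ← ENNReal.ofReal_toReal htop, ← ENNReal.ofReal_ofNat 2,
      ← ENNReal.ofReal_mul (by norm_num)]
    gcongr
    linarith
  have hi₁ := key (by positivity : 0 ≤ t / 4) hm₁ (C := A ∩ B) (by
    rintro r ⟨hrA, hr, hr'⟩
    have hrpos : 0 < |r| := lt_of_lt_of_le (by positivity) hr
    refine ⟨hrA, abs_pos.1 hrpos, ?_⟩
    rw [← htT, ← ENNReal.ofReal_mul (abs_nonneg _), abs_inv]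
    gcongr
    rw [inv_mul_eq_div, le_div_iff₀ hrpos, mul_comm]
    exact (le_div_iff₀ hδ).1 hr') (fun r hr => hr.2.1)
  have hi₂ := key (by positivity : 0 ≤ t / δ) hm₂ (C := A) Set.inter_subset_left fun r hr => hr.2
  have e₁ : T ^ k = 4 ^ k * ENNReal.ofReal (t / 4) ^ k := by
    rw [← mul_pow, ← ENNReal.ofReal_ofNat 4, ← ENNReal.ofReal_mul (by norm_num), ← htT]
    congr 2
    ring
  have e₂ : T ^ k = ENNReal.ofReal (δ ^ k) * ENNReal.ofReal (t / δ) ^ k := by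
    rw [ENNReal.ofReal_pow hδ.le, ← mul_pow, ← ENNReal.ofReal_mul hδ.le, ← htT]
    congr 2
    field_simp
  calc T ^ (k + 1) ≤ T ^ k * (2 * (volume A₁ + volume A₂)) := by rw [pow_succ]; gcongr
    _ = 2 * (T ^ k * volume A₁) + 2 * (T ^ k * volume A₂) := by ring
    _ = 2 * 4 ^ k * (ENNReal.ofReal (t / 4) ^ k * volume A₁)
        + 2 * ENNReal.ofReal (δ ^ k) * (ENNReal.ofReal (t / δ) ^ k * volume A₂) := by
      rw [mul_assoc 2 (4 ^ k), ← mul_assoc (4 ^ k), ← e₁, mul_assoc 2 (ENNReal.ofReal (δ ^ k)),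
        ← mul_assoc (ENNReal.ofReal (δ ^ k)), ← e₂]
    _ ≤ _ := by gcongr

variable {V : Type*} [NormedAddCommGroup V] [NormedSpace ℝ V]

theorem chordRatio_add_smul (E : Set V) (x ξ : V) {r : ℝ} (hr : r ≠ 0) :
    chordRatio E x (x + r • ξ) = ENNReal.ofReal |r⁻¹| * volume {t : ℝ | x + t • ξ ∈ E} := by
  rw [← Real.volume_preimage_mul_right hr, chordRatio]
  congr 1
  ext u
  simp [mul_smul]

variable [MeasurableSpace V] [BorelSpace V]
  [FiniteDimensional ℝ V] (μ : Measure V) [μ.IsAddHaarMeasure]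

theorem lintegral_toSphere_lintegral_Ioi [Nontrivial V] {h : V → ℝ≥0∞} (hh : Measurable h) :
    ∫⁻ ξ : Metric.sphere (0 : V) 1, (∫⁻ r in Set.Ioi (0 : ℝ),
      ENNReal.ofReal (r ^ (Module.finrank ℝ V - 1)) * h (r • (ξ : V))) ∂μ.toSphere
      = ∫⁻ y, h y ∂μ := by
  have hmp := μ.measurePreserving_homeomorphUnitSphereProd
  have hg : Measurable fun p : Metric.sphere (0 : V) 1 × Set.Ioi (0 : ℝ) =>
      h ((p.2 : ℝ) • (p.1 : V)) := by fun_prop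
  have h1 : ∫⁻ y, h y ∂μ = ∫⁻ y : ({0}ᶜ : Set V), h y ∂(μ.comap (↑)) := by
    rw [lintegral_subtype_comap (measurableSet_singleton _).compl h,
      restrict_compl_singleton]
  have h2 : ∀ y : ({0}ᶜ : Set V), h y = (fun p : Metric.sphere (0 : V) 1 × Set.Ioi (0 : ℝ) =>
      h ((p.2 : ℝ) • (p.1 : V))) (homeomorphUnitSphereProd V y) := fun y => by
    have : ‖(y : V)‖ ≠ 0 := norm_ne_zero_iff.2 y.2
    simp [smul_smul, this]
  rw [h1, lintegral_congr h2, hmp.lintegral_comp hg, lintegral_prod _ hg.aemeasurable]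
  refine lintegral_congr fun ξ => ?_
  have hr : Measurable fun r : Set.Ioi (0 : ℝ) => h ((r : ℝ) • (ξ : V)) := by fun_prop
  rw [Measure.volumeIoiPow, lintegral_withDensity_eq_lintegral_mul _ (by fun_prop) hr]
  exact (lintegral_subtype_comap measurableSet_Ioi fun r : ℝ =>
    ENNReal.ofReal (r ^ (Module.finrank ℝ V - 1)) * h (r • (ξ : V))).symm

theorem lintegral_toSphere_lintegral_abs [Nontrivial V] {h : V → ℝ≥0∞} (hh : Measurable h) :
    ∫⁻ ξ : Metric.sphere (0 : V) 1, (∫⁻ r : ℝ,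
      ENNReal.ofReal (|r| ^ (Module.finrank ℝ V - 1)) * h (r • (ξ : V))) ∂μ.toSphere
      = 2 * ∫⁻ y, h y ∂μ := by
  set d := Module.finrank ℝ V - 1
  have hsplit : ∀ f : ℝ → ℝ≥0∞, ∫⁻ r, f r
      = (∫⁻ r in Set.Ioi 0, f r) + ∫⁻ r in Set.Ioi 0, f (-r) := fun f => by
    have h1 : ∫⁻ r in Set.Ioi (0 : ℝ), f (-r) = ∫⁻ r in Set.Iio 0, f r := by
      rw [← lintegral_indicator measurableSet_Ioi, ← lintegral_indicator measurableSet_Iio,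
        ← lintegral_neg_eq_self]
      refine lintegral_congr fun r => ?_
      simp [Set.indicator]
    rw [h1, ← lintegral_add_compl f measurableSet_Ioi, Set.compl_Ioi,
      setLIntegral_congr Iio_ae_eq_Iic]
  have hneg : ∫⁻ y, h (-y) ∂μ = ∫⁻ y, h y ∂μ := by
    have := lintegral_comp_smul_addHaar μ hh (r := -1) (by norm_num)
    simpa using this
  rw [two_mul, ← lintegral_toSphere_lintegral_Ioi μ hh]
  nth_rw 2 [lintegral_toSphere_lintegral_Ioi μ hh]
  rw [← hneg, ← lintegral_toSphere_lintegral_Ioi μ (h := fun y => h (-y)) (by fun_prop),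
    ← lintegral_add_left (by fun_prop)]
  refine lintegral_congr fun ξ => ?_
  rw [hsplit]
  congr 1
  · refine setLIntegral_congr_fun measurableSet_Ioi fun r hr => ?_
    simp only [abs_of_pos (show 0 < r from hr), d]
  · refine setLIntegral_congr_fun measurableSet_Ioi fun r hr => ?_
    simp only [abs_neg, abs_of_pos (show 0 < r from hr), d, neg_smul]

theorem lintegral_toSphere_pow_volume_le [Nontrivial V] {E : Set V} (hE : MeasurableSet E)
    {δ : ℝ} (hδ : 0 < δ) {k : ℕ} (hk : Module.finrank ℝ V = k + 1) (x : V) :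
    ∫⁻ ξ : Metric.sphere (0 : V) 1, volume {t : ℝ | x + t • (ξ : V) ∈ E} ^ (k + 1) ∂μ.toSphere
      ≤ 4 * 4 ^ k * ∫⁻ y in E, chordKernel E δ x y ∂μ + 4 * ENNReal.ofReal (δ ^ k) * μ E := by
  set h₁ : V → ℝ≥0∞ := fun y => E.indicator (chordKernel E δ x) (x + y)
  set h₂ : V → ℝ≥0∞ := fun y => E.indicator 1 (x + y)
  have hK : Measurable (chordKernel E δ x) :=
    (measurable_chordKernel hE δ).comp measurable_prodMk_left
  have hm₁ : Measurable h₁ := (hK.indicator hE).comp (measurable_const_add x)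
  have hm₂ : Measurable h₂ := (measurable_one.indicator hE).comp (measurable_const_add x)
  have hi₁ : ∫⁻ y, h₁ y ∂μ = ∫⁻ y in E, chordKernel E δ x y ∂μ := by
    rw [lintegral_add_left_eq_self (fun y => E.indicator (chordKernel E δ x) y),
      lintegral_indicator hE]
  have hi₂ : ∫⁻ y, h₂ y ∂μ = μ E := by
    rw [lintegral_add_left_eq_self (fun y => E.indicator 1 y), lintegral_indicator_one hE]
  have hpt : ∀ ξ : V, volume {t : ℝ | x + t • ξ ∈ E} ^ (k + 1)
      ≤ 2 * 4 ^ k * (∫⁻ r : ℝ, ENNReal.ofReal (|r| ^ k) * h₁ (r • ξ))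
        + 2 * ENNReal.ofReal (δ ^ k) * ∫⁻ r : ℝ, ENNReal.ofReal (|r| ^ k) * h₂ (r • ξ) := by
    intro ξ
    have hA : MeasurableSet {t : ℝ | x + t • ξ ∈ E} := by
      have : Measurable fun t : ℝ => x + t • ξ := by fun_prop
      exact this hE
    refine (pow_volume_le_setLIntegral hA k hδ).trans ?_
    have hB : MeasurableSet {r : ℝ | r ≠ 0 ∧ ENNReal.ofReal δ
        ≤ ENNReal.ofReal |r⁻¹| * volume {t : ℝ | x + t • ξ ∈ E}} :=
      (measurableSet_singleton (0 : ℝ)).compl.inter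
        (measurableSet_le measurable_const
          ((measurable_inv.abs.ennreal_ofReal).mul_const _))
    refine add_le_add (mul_le_mul_right ?_ _) (mul_le_mul_right ?_ _)
    · rw [← lintegral_indicator (hA.inter hB)]
      refine lintegral_mono (Set.indicator_le' (fun r hr => ?_) fun _ _ => zero_le)
      have h1 : h₁ (r • ξ) = 1 := by
        simp only [h₁]
        rw [Set.indicator_of_mem (show x + r • ξ ∈ E from hr.1), chordKernel,
          chordRatio_add_smul E x ξ hr.2.1, if_pos hr.2.2]
      rw [h1, mul_one]
    · rw [← lintegral_indicator hA]
      refine lintegral_mono (Set.indicator_le' (fun r hr => ?_) fun _ _ => zero_le)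
      have h1 : h₂ (r • ξ) = 1 := Set.indicator_of_mem (show x + r • ξ ∈ E from hr) _
      rw [h1, mul_one]
  refine (lintegral_mono fun ξ : Metric.sphere (0 : V) 1 => hpt ξ).trans (le_of_eq ?_)
  have p₁ := lintegral_toSphere_lintegral_abs μ hm₁
  have p₂ := lintegral_toSphere_lintegral_abs μ hm₂
  rw [hk, Nat.add_sub_cancel] at p₁ p₂
  rw [lintegral_add_left (by fun_prop), lintegral_const_mul _ (by fun_prop),
    lintegral_const_mul _ (by fun_prop), p₁, p₂, hi₁, hi₂]
  ring

end Polar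

theorem Jn_le {n : ℕ} (hn : 1 < n) {E : Set (EuclideanSpace ℝ (Fin n))} (hE : MeasurableSet E)
    {δ : ℝ} (hδ : 0 < δ) :
    Jn n E ≤ 4 ^ n * (∫⁻ x in E, (∫⁻ y in E, chordKernel E δ x y))
      + 4 * ENNReal.ofReal (δ ^ (n - 1)) * volume E ^ 2 := by
  obtain ⟨k, rfl⟩ : ∃ k, n = k + 1 := ⟨n - 1, by omega⟩
  have hm : Measurable fun p : Metric.sphere (0 : EuclideanSpace ℝ (Fin (k + 1))) 1 ×
      EuclideanSpace ℝ (Fin (k + 1)) =>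
      volume {t : ℝ | p.2 + t • (p.1 : EuclideanSpace ℝ (Fin (k + 1))) ∈ E} := by
    have h : Measurable fun q : (Metric.sphere (0 : EuclideanSpace ℝ (Fin (k + 1))) 1 ×
        EuclideanSpace ℝ (Fin (k + 1))) × ℝ =>
        q.1.2 + q.2 • (q.1.1 : EuclideanSpace ℝ (Fin (k + 1))) := by fun_prop
    exact measurable_measure_prodMk_left (ν := (volume : Measure ℝ)) (h hE)
  have hK : Measurable fun x : EuclideanSpace ℝ (Fin (k + 1)) =>
      ∫⁻ y in E, chordKernel E δ x y := (measurable_chordKernel hE δ).lintegral_prod_right'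
  rw [Jn, lintegral_lintegral_swap (hm.pow_const (k + 1)).aemeasurable]
  refine (lintegral_mono fun x => lintegral_toSphere_pow_volume_le volume hE hδ
    finrank_euclideanSpace_fin x).trans (le_of_eq ?_)
  rw [lintegral_add_left (by fun_prop), lintegral_const_mul _ hK, lintegral_const,
    Measure.restrict_apply_univ, Nat.add_sub_cancel]
  ring

section FrameBox

variable {n : ℕ}

/-- The parallelotope centred at `x₀` with half-axes `R • (x i - x₀)`. -/
def frameBox (x₀ : Fin n → ℝ) (x : Fin n → Fin n → ℝ) (R : ℝ) : Set (Fin n → ℝ) :=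
  (fun b : Fin n → ℝ => x₀ + ∑ i, b i • (x i - x₀)) '' Set.univ.pi fun _ => Set.Icc (-R) R

theorem image_frame_eq (x₀ : Fin n → ℝ) (x : Fin n → Fin n → ℝ) (s : Set (Fin n → ℝ)) :
    (fun b : Fin n → ℝ => x₀ + ∑ i, b i • (x i - x₀)) '' s
      = (fun y => x₀ + y) '' (Matrix.toLin' (Matrix.of fun i => x i - x₀).transpose '' s) := by
  rw [Set.image_image]
  refine Set.image_congr fun b _ => ?_
  rw [Matrix.toLin'_apply, Matrix.mulVec_transpose, Matrix.vecMul_eq_sum]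
  rfl

theorem volume_image_frame (x₀ : Fin n → ℝ) (x : Fin n → Fin n → ℝ) (s : Set (Fin n → ℝ)) :
    volume ((fun b : Fin n → ℝ => x₀ + ∑ i, b i • (x i - x₀)) '' s)
      = ENNReal.ofReal |(Matrix.of fun i => x i - x₀).det| * volume s := by
  rw [image_frame_eq, Set.image_add_left, measure_preimage_add, Measure.addHaar_image_linearMap,
    LinearMap.det_toLin', Matrix.det_transpose]

theorem convex_frameBox (x₀ : Fin n → ℝ) (x : Fin n → Fin n → ℝ) (R : ℝ) :
    Convex ℝ (frameBox x₀ x R) := by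
  rw [frameBox, image_frame_eq]
  exact ((convex_pi fun _ _ => convex_Icc _ _).linear_image _).translate x₀

theorem volume_frameBox (x₀ : Fin n → ℝ) (x : Fin n → Fin n → ℝ) (R : ℝ) :
    volume (frameBox x₀ x R)
      = ENNReal.ofReal |(Matrix.of fun i => x i - x₀).det| * ENNReal.ofReal (2 * R) ^ n := by
  rw [frameBox, volume_image_frame, volume_pi_pi]
  simp [two_mul]

theorem volume_inter_frameBox {E : Set (Fin n → ℝ)} (hE : MeasurableSet E) (x₀ : Fin n → ℝ)
    (x : Fin n → Fin n → ℝ) (R : ℝ) :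
    volume (E ∩ frameBox x₀ x R) = ENNReal.ofReal |(Matrix.of fun i => x i - x₀).det| *
      ∫⁻ b, E.indicator 1 (x₀ + ∑ i, b i • (x i - x₀)) ∂(cubeMeasure n R) := by
  have hm : Measurable fun b : Fin n → ℝ => x₀ + ∑ i, b i • (x i - x₀) := by fun_prop
  rw [Set.inter_comm, frameBox, ← Set.image_inter_preimage, volume_image_frame,
    cubeMeasure_eq_restrict, Set.inter_comm, ← Measure.restrict_apply (hm hE),
    ← lintegral_indicator_one (hm hE)]
  rfl

theorem cubeMeasure_univ (k : ℕ) (R : ℝ) :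
    cubeMeasure k R Set.univ = ENNReal.ofReal (2 * R) ^ k := by
  rw [cubeMeasure, Measure.pi_univ]
  simp [two_mul]

theorem exists_lt_abs_det_and_le_lintegral {μ : Measure (Fin n → ℝ)} [IsProbabilityMeasure μ]
    {E : Set (Fin n → ℝ)} {R c η : ℝ} (hc : 0 < c)
    (h : ENNReal.ofReal c ≤ simplexIntegral μ n R (E.indicator 1))
    (hη : ∀ x₀, ENNReal.ofReal (2 * R) ^ n *
      (Measure.pi fun _ : Fin n => μ) {x | |(Matrix.of fun i => x i - x₀).det| ≤ η}
        ≤ ENNReal.ofReal (c / 4)) :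
    ∃ (x₀ : Fin n → ℝ) (x : Fin n → Fin n → ℝ), η < |(Matrix.of fun i => x i - x₀).det| ∧
      ENNReal.ofReal (c / 2)
        ≤ ∫⁻ b, E.indicator 1 (x₀ + ∑ i, b i • (x i - x₀)) ∂(cubeMeasure n R) := by
  by_contra! hcon
  set S : (Fin n → ℝ) → Set (Fin n → Fin n → ℝ) :=
    fun x₀ => {x | |(Matrix.of fun i => x i - x₀).det| ≤ η}
  have hpt : ∀ x₀ x, ∫⁻ b, E.indicator 1 (x₀ + ∑ i, b i • (x i - x₀)) ∂(cubeMeasure n R)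
      ≤ ENNReal.ofReal (c / 2) + ENNReal.ofReal (2 * R) ^ n * (S x₀).indicator 1 x := by
    intro x₀ x
    by_cases hx : x ∈ S x₀
    · rw [Set.indicator_of_mem hx, Pi.one_apply, mul_one, ← cubeMeasure_univ]
      refine le_trans (lintegral_mono fun b => ?_) (le_trans (lintegral_one).le le_add_self)
      exact Set.indicator_le_self _ _ _
    · exact (hcon x₀ x (not_le.1 hx)).le.trans le_self_add
  have hin : ∀ x₀, ∫⁻ x, (ENNReal.ofReal (c / 2)
        + ENNReal.ofReal (2 * R) ^ n * (S x₀).indicator 1 x) ∂(Measure.pi fun _ : Fin n => μ)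
      ≤ ENNReal.ofReal (c / 2) + ENNReal.ofReal (c / 4) := by
    intro x₀
    rw [lintegral_add_left measurable_const, lintegral_const_mul' _ _ (by finiteness)]
    refine add_le_add (by simp) (le_trans ?_ (hη x₀))
    gcongr
    exact lintegral_indicator_one_le _
  have hle : ENNReal.ofReal c ≤ ENNReal.ofReal (c / 2) + ENNReal.ofReal (c / 4) :=
    calc ENNReal.ofReal c ≤ simplexIntegral μ n R (E.indicator 1) := h
      _ ≤ ∫⁻ _, (ENNReal.ofReal (c / 2) + ENNReal.ofReal (c / 4)) ∂μ :=
        lintegral_mono fun x₀ => (lintegral_mono fun x => hpt x₀ x).trans (hin x₀)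
      _ = _ := by simp
  rw [← ENNReal.ofReal_add (by positivity) (by positivity),
    ENNReal.ofReal_le_ofReal_iff (by positivity)] at hle
  linarith

end FrameBox

theorem exists_convex_of_le_lintegral_chordKernel {n : ℕ} (hn : 2 ≤ n) {δ p : ℝ} (hδ : 0 < δ)
    (hδ1 : δ ≤ 1) (hp : 0 < p) :
    ∃ c' ∈ Set.Ioo (0 : ℝ) 1, ∀ E : Set (Fin n → ℝ), MeasurableSet E →
      0 < volume E → volume E < ⊤ →
      ENNReal.ofReal p * volume E ^ 2 ≤ ∫⁻ x in E, (∫⁻ y in E, chordKernel E δ x y) →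
      ∃ F : Set (Fin n → ℝ), Convex ℝ F ∧ ENNReal.ofReal c' * volume E ≤ volume F ∧
        volume F ≤ ENNReal.ofReal c'⁻¹ * volume E ∧
        ENNReal.ofReal c' * volume E ≤ volume (E ∩ F) := by
  set R := (1 + 8 / δ) ^ n
  have hR : 0 < R := by positivity
  set L := (2 * R) ^ n
  have hL : 0 < L := by positivity
  set q := ((δ / 16) ^ (2 * n) * (δ / 2)) ^ n * p ^ 2 ^ n with hq
  have hqpos : 0 < q := by positivity
  have hn0 : (0 : ℝ) < n := by exact_mod_cast (by omega : 0 < n)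
  set ε := q / (4 * n * 2 ^ n * L) with hε
  have hεpos : 0 < ε := by positivity
  set c' := min (1 / 2) (min (ε * q / 2) (q / (2 * L)))
  have hc'pos : 0 < c' := lt_min (by norm_num) (lt_min (by positivity) (by positivity))
  have hc'1 : c' ≤ ε * q / 2 := (min_le_right _ _).trans (min_le_left _ _)
  have hc'2 : c' ≤ q / (2 * L) := (min_le_right _ _).trans (min_le_right _ _)
  refine ⟨c', ⟨hc'pos, (min_le_left _ _).trans_lt (by norm_num)⟩, fun E hE hE0 hEt hP => ?_⟩
  set m := (volume E).toReal
  have hm : volume E = ENNReal.ofReal m := (ENNReal.ofReal_toReal hEt.ne).symm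
  have hmpos : 0 < m := ENNReal.toReal_pos hE0.ne' hEt.ne
  set c₀ := (volume E)⁻¹
  have hc₀ : c₀ = ENNReal.ofReal m⁻¹ := by rw [ENNReal.ofReal_inv_of_pos hmpos, ← hm]
  set ν : Measure (Fin n → ℝ) := c₀ • volume with hν
  have : ν.IsAddHaarMeasure := Measure.IsAddHaarMeasure.smul volume
    (ENNReal.inv_ne_zero.2 hEt.ne) (ENNReal.inv_ne_top.2 hE0.ne')
  have : IsProbabilityMeasure (ν.restrict E) := ⟨by
    rw [Measure.restrict_apply_univ, hν, Measure.smul_apply, smul_eq_mul,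
      ENNReal.inv_mul_cancel hE0.ne' hEt.ne]⟩
  have hPν : ENNReal.ofReal p ≤ ∫⁻ x in E, (∫⁻ y in E, chordKernel E δ x y ∂ν) ∂ν := by
    have hK : Measurable fun x => ∫⁻ y in E, chordKernel E δ x y :=
      (measurable_chordKernel hE δ).lintegral_prod_right'
    simp only [hν, Measure.restrict_smul, lintegral_smul_measure, smul_eq_mul]
    rw [lintegral_const_mul _ hK]
    calc ENNReal.ofReal p = c₀ * (c₀ * (ENNReal.ofReal p * volume E ^ 2)) := by
          rw [show c₀ * (c₀ * (ENNReal.ofReal p * volume E ^ 2))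
            = ENNReal.ofReal p * (c₀ * volume E) ^ 2 by ring,
            ENNReal.inv_mul_cancel hE0.ne' hEt.ne, one_pow, mul_one]
      _ ≤ _ := by gcongr
  have hQ : ENNReal.ofReal q ≤ simplexIntegral (ν.restrict E) n R (E.indicator 1) := by
    refine le_trans ?_ (pow_le_simplexIntegral ν hE hδ hδ1 (Module.finrank_fin_fun ℝ) hn)
    rw [hq, ENNReal.ofReal_mul (by positivity), ENNReal.ofReal_pow (by positivity),
      ENNReal.ofReal_pow hp.le]
    gcongr
  obtain ⟨x₀, x, hdet, hint⟩ := exists_lt_abs_det_and_le_lintegral hqpos hQ (η := ε * m)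
    fun x₀ => by
      refine (mul_le_mul_right (pi_setOf_abs_det_le (by omega) ν hν E x₀ (by positivity)) _).trans
        (le_of_eq ?_)
      rw [hc₀, ← ENNReal.ofReal_natCast, ← ENNReal.ofReal_mul (by positivity),
        ← ENNReal.ofReal_mul (by positivity), ← ENNReal.ofReal_pow (by positivity),
        ← ENNReal.ofReal_mul (by positivity)]
      congr 1
      rw [hε]
      field_simp
      rfl
  set D := |(Matrix.of fun i => x i - x₀).det|
  have hD : 0 ≤ D := abs_nonneg _
  have hinter := volume_inter_frameBox hE x₀ x R
  have hlow : ENNReal.ofReal (D * (q / 2)) ≤ volume (E ∩ frameBox x₀ x R) := by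
    rw [hinter, ENNReal.ofReal_mul hD]
    gcongr
  have hDm : D * (q / 2) ≤ m := by
    rw [← ENNReal.ofReal_le_ofReal_iff hmpos.le, ← hm]
    exact hlow.trans (measure_mono Set.inter_subset_left)
  have hthird : ENNReal.ofReal c' * volume E ≤ volume (E ∩ frameBox x₀ x R) := by
    refine le_trans ?_ hlow
    rw [hm, ← ENNReal.ofReal_mul hc'pos.le]
    refine ENNReal.ofReal_le_ofReal ?_
    calc c' * m ≤ ε * q / 2 * m := by gcongr
      _ = ε * m * (q / 2) := by ring
      _ ≤ D * (q / 2) := by gcongr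
  refine ⟨frameBox x₀ x R, convex_frameBox x₀ x R,
    hthird.trans (measure_mono Set.inter_subset_right), ?_, hthird⟩
  rw [volume_frameBox, hm, ← ENNReal.ofReal_mul (by positivity),
    ← ENNReal.ofReal_pow (by positivity), ← ENNReal.ofReal_mul hD]
  refine ENNReal.ofReal_le_ofReal ?_
  rw [inv_mul_eq_div, le_div_iff₀ hc'pos]
  calc D * L * c' ≤ D * L * (q / (2 * L)) := by gcongr
    _ = D * (q / 2) := by field_simp
    _ ≤ m := hDm

theorem lintegral_chordKernel_preimage_toLp {n : ℕ} {E : Set (EuclideanSpace ℝ (Fin n))}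
    (hE : MeasurableSet E) (δ : ℝ) :
    ∫⁻ x in WithLp.toLp 2 ⁻¹' E, (∫⁻ y in WithLp.toLp 2 ⁻¹' E,
        chordKernel (WithLp.toLp 2 ⁻¹' E : Set (Fin n → ℝ)) δ x y)
      = ∫⁻ x in E, (∫⁻ y in E, chordKernel E δ x y) := by
  have hmp := PiLp.volume_preserving_toLp (Fin n)
  have hK := measurable_chordKernel hE δ
  rw [← hmp.setLIntegral_comp_preimage hE (f := fun x => ∫⁻ y in E, chordKernel E δ x y)
    hK.lintegral_prod_right']
  refine lintegral_congr fun x => ?_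
  exact hmp.setLIntegral_comp_preimage hE (f := chordKernel E δ (WithLp.toLp 2 x))
    (hK.comp measurable_prodMk_left)

theorem le_lintegral_chordKernel_of_le_Jn {n : ℕ} (hn : 2 ≤ n) {c : ℝ} (hc : c ∈ Set.Ioo (0 : ℝ) 1)
    {E : Set (EuclideanSpace ℝ (Fin n))} (hE : MeasurableSet E) (hEt : volume E < ⊤)
    (h : ENNReal.ofReal (c * (n : ℝ) * ((n : ℝ) + 1)) * volume E ^ 2 ≤ Jn n E) :
    ENNReal.ofReal (c / 4 ^ n) * volume E ^ 2
      ≤ ∫⁻ x in E, (∫⁻ y in E, chordKernel E (c / 2) x y) := by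
  obtain ⟨hc0, hc1⟩ := hc
  set P := ∫⁻ x in E, (∫⁻ y in E, chordKernel E (c / 2) x y)
  have hn' : (2 : ℝ) ≤ n := by exact_mod_cast hn
  have h1 : 4 * ENNReal.ofReal ((c / 2) ^ (n - 1)) ≤ ENNReal.ofReal (2 * c) := by
    rw [← ENNReal.ofReal_ofNat 4, ← ENNReal.ofReal_mul (by norm_num)]
    have : (c / 2) ^ (n - 1) ≤ (c / 2) ^ 1 :=
      pow_le_pow_of_le_one (by positivity) (by linarith) (by omega)
    refine ENNReal.ofReal_le_ofReal ?_
    linarith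
  have h2 : ENNReal.ofReal c + ENNReal.ofReal (2 * c)
      ≤ ENNReal.ofReal (c * (n : ℝ) * ((n : ℝ) + 1)) := by
    rw [← ENNReal.ofReal_add (by positivity) (by positivity)]
    gcongr
    nlinarith [mul_nonneg hc0.le (by nlinarith : (0 : ℝ) ≤ n * (n + 1) - 3)]
  have h3 : ENNReal.ofReal c * volume E ^ 2 + ENNReal.ofReal (2 * c) * volume E ^ 2
      ≤ 4 ^ n * P + ENNReal.ofReal (2 * c) * volume E ^ 2 :=
    calc ENNReal.ofReal c * volume E ^ 2 + ENNReal.ofReal (2 * c) * volume E ^ 2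
        ≤ ENNReal.ofReal (c * (n : ℝ) * ((n : ℝ) + 1)) * volume E ^ 2 := by
          rw [← add_mul]; gcongr
      _ ≤ 4 ^ n * P + 4 * ENNReal.ofReal ((c / 2) ^ (n - 1)) * volume E ^ 2 :=
          h.trans (Jn_le (by omega) hE (by positivity))
      _ ≤ _ := by gcongr
  have h4 := (ENNReal.add_le_add_iff_right (by finiteness)).1 h3
  rw [ENNReal.ofReal_div_of_pos (by positivity), ENNReal.ofReal_pow (by norm_num),
    ENNReal.ofReal_ofNat, div_eq_mul_inv, mul_right_comm, ← div_eq_mul_inv]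
  exact ENNReal.div_le_of_le_mul' h4

/-- a large convexity index forces the presence of a comparable convex set. -/
theorem statement15 (n : ℕ) (hn : 2 ≤ n) (c : ℝ) (hc : c ∈ Set.Ioo (0 : ℝ) 1) :
    ∃ c' : ℝ, c' ∈ Set.Ioo (0 : ℝ) 1 ∧
      ∀ E : Set (EuclideanSpace ℝ (Fin n)), MeasurableSet E →
        0 < volume E → volume E < ⊤ →
        ENNReal.ofReal (c * (n : ℝ) * ((n : ℝ) + 1)) * (volume E) ^ 2 ≤ Jn n E →
        ∃ F : Set (EuclideanSpace ℝ (Fin n)), Convex ℝ F ∧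
          ENNReal.ofReal c' * volume E ≤ volume F ∧
          volume F ≤ ENNReal.ofReal c'⁻¹ * volume E ∧
          ENNReal.ofReal c' * volume E ≤ volume (E ∩ F) := by
  obtain ⟨c', hc', hF⟩ := exists_convex_of_le_lintegral_chordKernel hn (δ := c / 2)
    (p := c / 4 ^ n) (by linarith [hc.1]) (by linarith [hc.2]) (div_pos hc.1 (by positivity))
  refine ⟨c', hc', fun E hE hE0 hEt hJ => ?_⟩
  have hmp := PiLp.volume_preserving_toLp (Fin n)
  have hvol : volume (WithLp.toLp 2 ⁻¹' E : Set (Fin n → ℝ)) = volume E :=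
    hmp.measure_preimage hE.nullMeasurableSet
  obtain ⟨F, hFc, h1, h2, h3⟩ := hF (WithLp.toLp 2 ⁻¹' E) (hmp.measurable hE)
    (by rwa [hvol]) (by rwa [hvol]) (by
      rw [hvol, lintegral_chordKernel_preimage_toLp hE]
      exact le_lintegral_chordKernel_of_le_Jn hn hc hE hEt hJ)
  have hvolF : ∀ s : Set (Fin n → ℝ),
      volume (WithLp.ofLp ⁻¹' s : Set (EuclideanSpace ℝ (Fin n))) = volume s :=
    (EuclideanSpace.volume_preserving_symm_measurableEquiv_toLp (Fin n)).measure_preimage_equiv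
  have hEF : E ∩ WithLp.ofLp ⁻¹' F = WithLp.ofLp ⁻¹' (WithLp.toLp 2 ⁻¹' E ∩ F) := rfl
  rw [hvol] at h1 h2 h3
  refine ⟨WithLp.ofLp ⁻¹' F,
    hFc.linear_preimage (WithLp.linearEquiv 2 ℝ (Fin n → ℝ)).toLinearMap, ?_, ?_, ?_⟩
  · rwa [hvolF]
  · rwa [hvolF]
  · rwa [hEF, hvolF]
end
end
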